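/- The graph of a minimizer above any open set of differentiability contains no extreme points of the associated convex body: if u : Ω → [0, M] is concave and minimizes J over all concave functions v : Ω → [0, M], K = cl{(x, z) ∈ Ω × ℝ : 0 ≤ z ≤ u(x)} is the associated convex body, and ω ⊆ Ω is an open set such that u is differentiable at every point of ω, then for every x ∈ ω the point (x, u(x)) ∈ ℝ³ is not an extreme point of K. -/

import Mathlib

open Set MeasureTheory

/-- The open unit disc in `ℝ²`. -/
noncomputable def Omega : Set (EuclideanSpace ℝ (Fin 2)) :=
  Metric.ball (0 : EuclideanSpace ℝ (Fin 2)) 1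

/-- Newton's resistance functional `J(u) = ∫_Ω 1/(|∇u|² + 1) dx`. -/
noncomputable def J (u : EuclideanSpace ℝ (Fin 2) → ℝ) : ℝ :=
  ∫ x in Omega, 1 / (‖gradient u x‖ ^ 2 + 1)

/-- The convex body in `ℝ³ ≅ ℝ² × ℝ` associated with `u : Ω → [0, M]`:
`K = cl {(x, z) : x ∈ Ω, 0 ≤ z ≤ u(x)}`. -/
noncomputable def assocBody (u : EuclideanSpace ℝ (Fin 2) → ℝ) :
    Set (EuclideanSpace ℝ (Fin 2) × ℝ) :=
  closure {p : EuclideanSpace ℝ (Fin 2) × ℝ |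
    p.1 ∈ Omega ∧ 0 ≤ p.2 ∧ p.2 ≤ u p.1}

/-!
Let `g ξ` be the maximum of `z - ⟪ξ, x⟫` over the points `(x, z)` of the body, so that `u` is the
infimum of the affine functions `g ξ + ⟪ξ, ·⟫`. The substitution `x = -∇ g ξ` turns `J u` into
`∫ F det D²g` with `F ξ = 1 / (‖ξ‖² + 1)`. Write `H` for the polarised Hessian determinant, for
which `∫ a H(b, c)` is symmetric in `a`, `b`, `c`. If `v` belongs to a convex function `G` which
differs from `g` only in a ball, then
`J v - J u = ½ ∫ (G - g) H(F, G + g) = ½ ∫ (G + g) H(F, G - g)`.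

An extreme point of the body on the graph of `u` can be strictly separated from the rest of the
body. This gives a ball of slopes `ξ`, away from `0`, whose supporting planes touch the body only
where `u` is differentiable, and there differentiability of `u` makes `g` strictly convex. Hence `g`
can be perturbed in both directions, and minimality of `u` gives `∫ g H(F, χ) = 0` for all smooth
`χ` supported in the ball. Now take `G = max g P` for a smooth convex `P` that exceeds `g` only near
the centre `c` of the ball and bends mainly in the radial direction. There `F` is concave in the
tangential direction, so `H(F, P) < 0` and `J v - J u = ½ ∫ (G - g) H(F, P) < 0`, contradicting
minimality.

As `g` and `G` are only convex, these identities are applied to smooth, strongly convex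
regularisations, with errors that vanish in the limit.
-/

section

open Filter Metric InnerProductSpace
open scoped ContDiff Topology Gradient Matrix

section Convexity

variable {E : Type*} [NormedAddCommGroup E] [NormedSpace ℝ E] {f : E → ℝ}

theorem convexOn_add_fderiv_sub_le {S : Set E} {f' : E →L[ℝ] ℝ} {x y : E} (hf : ConvexOn ℝ S f)
    (hx : x ∈ S) (hy : y ∈ S) (hf' : HasFDerivAt f f' x) : f x + f' (y - x) ≤ f y := by
  have hline : HasDerivAt (f ∘ AffineMap.lineMap (k := ℝ) x y) (f' (y - x)) 0 :=
    HasFDerivAt.comp_hasDerivAt (0 : ℝ) (by simpa using hf') AffineMap.hasDerivAt_lineMap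
  have hslope := (hf.comp_affineMap (AffineMap.lineMap (k := ℝ) x y)).le_slope_of_hasDerivAt
    (x := 0) (y := 1) (by simpa using hx) (by simpa using hy) one_pos hline
  simp only [slope_def_field, Function.comp_apply, AffineMap.lineMap_apply_zero,
    AffineMap.lineMap_apply_one, sub_zero, div_one] at hslope
  linarith

theorem fderiv_fderiv_nonneg_of_convexOn (hf : ContDiff ℝ 2 f) (hconv : ConvexOn ℝ univ f)
    (x v : E) : 0 ≤ fderiv ℝ (fderiv ℝ f) x v v := by
  have hline (t : ℝ) : HasDerivAt (fun t : ℝ ↦ x + t • v) v t := by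
    simpa using ((hasDerivAt_id t).smul_const v).const_add x
  have hfst (t : ℝ) :
      HasDerivAt (fun t : ℝ ↦ f (x + t • v)) (fderiv ℝ f (x + t • v) v) t :=
    ((hf.differentiable two_ne_zero) _).hasFDerivAt.comp_hasDerivAt t (hline t)
  have hsnd : HasDerivAt (fun t : ℝ ↦ fderiv ℝ f (x + t • v) v)
      (fderiv ℝ (fderiv ℝ f) x v v) 0 := by
    have hd : HasFDerivAt (fderiv ℝ f) (fderiv ℝ (fderiv ℝ f) x) (x + (0 : ℝ) • v) := by
      rw [zero_smul, add_zero]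
      exact ((hf.fderiv_right (m := 1) le_rfl).differentiable one_ne_zero x).hasFDerivAt
    have hcomp : HasDerivAt (fun t : ℝ ↦ fderiv ℝ f (x + t • v)) (fderiv ℝ (fderiv ℝ f) x v) 0 :=
      hd.comp_hasDerivAt 0 (hline 0)
    simpa using hcomp.clm_apply (hasDerivAt_const 0 v)
  have hconv_line : ConvexOn ℝ univ fun t : ℝ ↦ f (x + t • v) := by
    simpa [Function.comp_def, AffineMap.lineMap_apply, add_comm]
      using hconv.comp_affineMap (AffineMap.lineMap (k := ℝ) x (x + v))
  have hmono : Monotone fun t : ℝ ↦ fderiv ℝ f (x + t • v) v := by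
    simpa only [monotoneOn_univ, funext fun t ↦ (hfst t).deriv]
      using hconv_line.monotoneOn_deriv fun t _ ↦ (hfst t).differentiableAt
  exact hsnd.deriv ▸ hmono.deriv_nonneg

end Convexity

section PartialDerivatives

variable {n : ℕ} {f g : EuclideanSpace ℝ (Fin n) → ℝ}

/-- The partial derivative of `f` in the `i`-th coordinate direction. -/
noncomputable def partialDeriv (i : Fin n) (f : EuclideanSpace ℝ (Fin n) → ℝ) :
    EuclideanSpace ℝ (Fin n) → ℝ :=
  fun ξ ↦ fderiv ℝ f ξ (EuclideanSpace.single i 1)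

/-- The Hessian matrix of a function of several real variables. -/
noncomputable def hessian (f : EuclideanSpace ℝ (Fin n) → ℝ) (ξ : EuclideanSpace ℝ (Fin n)) :
    Matrix (Fin n) (Fin n) ℝ :=
  .of fun i j ↦ partialDeriv i (partialDeriv j f) ξ

theorem contDiff_partialDeriv (hf : ContDiff ℝ ∞ f) (i : Fin n) : ContDiff ℝ ∞ (partialDeriv i f) :=
  (hf.fderiv_right (m := ∞) le_rfl).clm_apply contDiff_const

theorem tsupport_partialDeriv_subset (f : EuclideanSpace ℝ (Fin n) → ℝ) (i : Fin n) :
    tsupport (partialDeriv i f) ⊆ tsupport f :=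
  tsupport_fderiv_apply_subset ℝ (EuclideanSpace.single i 1)

theorem partialDeriv_add (hf : Differentiable ℝ f) (hg : Differentiable ℝ g) (i : Fin n) :
    partialDeriv i (fun ξ ↦ f ξ + g ξ) = fun ξ ↦ partialDeriv i f ξ + partialDeriv i g ξ := by
  funext ξ
  simp [partialDeriv, fderiv_fun_add (hf ξ) (hg ξ)]

theorem partialDeriv_sub (hf : Differentiable ℝ f) (hg : Differentiable ℝ g) (i : Fin n) :
    partialDeriv i (fun ξ ↦ f ξ - g ξ) = fun ξ ↦ partialDeriv i f ξ - partialDeriv i g ξ := by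
  funext ξ
  simp [partialDeriv, fderiv_fun_sub (hf ξ) (hg ξ)]

theorem partialDeriv_const_mul (hf : Differentiable ℝ f) (c : ℝ) (i : Fin n) :
    partialDeriv i (fun ξ ↦ c * f ξ) = fun ξ ↦ c * partialDeriv i f ξ := by
  funext ξ
  simp [partialDeriv, fderiv_const_mul (hf ξ)]

theorem partialDeriv_mul (hf : Differentiable ℝ f) (hg : Differentiable ℝ g) (i : Fin n) :
    partialDeriv i (fun ξ ↦ f ξ * g ξ)
      = fun ξ ↦ partialDeriv i f ξ * g ξ + f ξ * partialDeriv i g ξ := by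
  funext ξ
  simp [partialDeriv, fderiv_fun_mul (hf ξ) (hg ξ)]
  ring

theorem partialDeriv_const (c : ℝ) (i : Fin n) :
    partialDeriv i (fun _ : EuclideanSpace ℝ (Fin n) ↦ c) = fun _ ↦ 0 := by
  funext ξ
  simp [partialDeriv]

theorem partialDeriv_inner (q : EuclideanSpace ℝ (Fin n)) (i : Fin n) :
    partialDeriv i (fun ξ ↦ ⟪q, ξ⟫_ℝ) = fun _ ↦ q i := by
  funext ξ
  have h : HasFDerivAt (fun ξ ↦ ⟪q, ξ⟫_ℝ) (innerSL ℝ q) ξ := (innerSL ℝ q).hasFDerivAt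
  simp [partialDeriv, h.fderiv, EuclideanSpace.inner_single_right]

theorem partialDeriv_coord (i j : Fin n) :
    partialDeriv i (fun ξ : EuclideanSpace ℝ (Fin n) ↦ ξ j) = fun _ ↦ if i = j then 1 else 0 := by
  funext ξ
  have h : HasFDerivAt (fun ξ : EuclideanSpace ℝ (Fin n) ↦ ξ j)
      (EuclideanSpace.proj j : EuclideanSpace ℝ (Fin n) →L[ℝ] ℝ) ξ :=
    (EuclideanSpace.proj j : EuclideanSpace ℝ (Fin n) →L[ℝ] ℝ).hasFDerivAt
  rw [partialDeriv, h.fderiv]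
  simp [eq_comm]

theorem partialDeriv_half_norm_sq (i : Fin n) :
    partialDeriv i (fun ξ ↦ 1 / 2 * ‖ξ‖ ^ 2) = fun ξ ↦ ξ i := by
  funext ξ
  have h : HasFDerivAt (fun ξ : EuclideanSpace ℝ (Fin n) ↦ ‖ξ‖ ^ 2) (2 • innerSL ℝ ξ) ξ :=
    (hasStrictFDerivAt_norm_sq ξ).hasFDerivAt
  rw [partialDeriv, (h.const_mul (1 / 2)).fderiv]
  simp [EuclideanSpace.inner_single_right]

theorem integral_partialDeriv_eq_zero (hf : ContDiff ℝ ∞ f) (hsupp : HasCompactSupport f)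
    (i : Fin n) : ∫ ξ, partialDeriv i f ξ = 0 := by
  have hint : Integrable (partialDeriv i f) :=
    (contDiff_partialDeriv hf i).continuous.integrable_of_hasCompactSupport
      (hsupp.fderiv_apply ℝ _)
  have hparts := integral_mul_fderiv_eq_neg_fderiv_mul_of_integrable
    (μ := (volume : Measure (EuclideanSpace ℝ (Fin n)))) (f := fun _ ↦ (1 : ℝ)) (g := f)
    (v := EuclideanSpace.single i 1) (by simp) (by simpa only [one_mul] using! hint)
    (by simpa using hf.continuous.integrable_of_hasCompactSupport hsupp)
    (by intros; fun_prop) fun ξ _ ↦ hf.differentiable (by simp) ξ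
  simpa [partialDeriv] using hparts

theorem hessian_apply_eq_fderiv_fderiv (hf : ContDiff ℝ ∞ f) (ξ : EuclideanSpace ℝ (Fin n))
    (i j : Fin n) :
    hessian f ξ i j
      = fderiv ℝ (fderiv ℝ f) ξ (EuclideanSpace.single i 1) (EuclideanSpace.single j 1) := by
  have hd : DifferentiableAt ℝ (fderiv ℝ f) ξ :=
    (hf.fderiv_right (m := ∞) le_rfl).differentiable (by simp) ξ
  change fderiv ℝ (fun y ↦ fderiv ℝ f y (EuclideanSpace.single j 1)) ξ _ = _
  simp [fderiv_clm_apply hd (differentiableAt_const _)]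

theorem hessian_isHermitian (hf : ContDiff ℝ ∞ f) (ξ : EuclideanSpace ℝ (Fin n)) :
    (hessian f ξ).IsHermitian := by
  have hsymm : IsSymmSndFDerivAt ℝ f ξ := hf.contDiffAt.isSymmSndFDerivAt <| by
    rw [minSmoothness_of_isRCLikeNormedField]
    exact WithTop.coe_le_coe.2 (le_top : (2 : ℕ∞) ≤ ⊤)
  ext i j
  simp only [Matrix.conjTranspose_apply, hessian_apply_eq_fderiv_fderiv hf, star_trivial]
  exact hsymm _ _

theorem partialDeriv_comm (hf : ContDiff ℝ ∞ f) (i j : Fin n) :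
    partialDeriv i (partialDeriv j f) = partialDeriv j (partialDeriv i f) :=
  funext fun ξ ↦ (hessian_isHermitian hf ξ).apply j i

theorem continuous_hessian_apply (hf : ContDiff ℝ ∞ f) (i j : Fin n) :
    Continuous fun ξ ↦ hessian f ξ i j :=
  (contDiff_partialDeriv (contDiff_partialDeriv hf j) i).continuous

theorem hessian_eq_zero_of_notMem_tsupport {ξ : EuclideanSpace ℝ (Fin n)} (hξ : ξ ∉ tsupport f) :
    hessian f ξ = 0 := by
  ext i j
  exact image_eq_zero_of_notMem_tsupport (f := partialDeriv i (partialDeriv j f)) fun h ↦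
    hξ (tsupport_partialDeriv_subset _ _ (tsupport_partialDeriv_subset _ _ h))

theorem hessian_add (hf : ContDiff ℝ ∞ f) (hg : ContDiff ℝ ∞ g) (ξ : EuclideanSpace ℝ (Fin n)) :
    hessian (fun η ↦ f η + g η) ξ = hessian f ξ + hessian g ξ := by
  have hd {h : EuclideanSpace ℝ (Fin n) → ℝ} (hh : ContDiff ℝ ∞ h) := hh.differentiable (by simp)
  ext i j
  simp [hessian, partialDeriv_add (hd hf) (hd hg),
    partialDeriv_add (hd (contDiff_partialDeriv hf j)) (hd (contDiff_partialDeriv hg j))]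

theorem hessian_const_mul (hf : ContDiff ℝ ∞ f) (c : ℝ) (ξ : EuclideanSpace ℝ (Fin n)) :
    hessian (fun η ↦ c * f η) ξ = c • hessian f ξ := by
  ext i j
  simp [hessian, partialDeriv_const_mul (hf.differentiable (by simp)),
    partialDeriv_const_mul ((contDiff_partialDeriv hf j).differentiable (by simp))]

theorem hessian_sub (hf : ContDiff ℝ ∞ f) (hg : ContDiff ℝ ∞ g) (ξ : EuclideanSpace ℝ (Fin n)) :
    hessian (fun η ↦ f η - g η) ξ = hessian f ξ - hessian g ξ := by
  have hneg := hessian_const_mul hg (-1) ξ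
  have hadd := hessian_add hf (contDiff_const.mul hg) (g := fun η ↦ -1 * g η) ξ
  simp_rw [neg_one_mul, ← sub_eq_add_neg] at hadd hneg
  rw [hadd, hneg, neg_one_smul, sub_eq_add_neg]

theorem hessian_affine (α : ℝ) (q ξ : EuclideanSpace ℝ (Fin n)) :
    hessian (fun η ↦ α + ⟪q, η⟫_ℝ) ξ = 0 := by
  ext i j
  have hq : Differentiable ℝ fun η ↦ ⟪q, η⟫_ℝ := (innerSL ℝ q).differentiable
  simp [hessian, partialDeriv_add (differentiable_const α) hq, partialDeriv_inner,
    partialDeriv_const]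

theorem hessian_half_norm_sq (ξ : EuclideanSpace ℝ (Fin n)) :
    hessian (fun η ↦ 1 / 2 * ‖η‖ ^ 2) ξ = 1 := by
  ext i j
  simp only [hessian, partialDeriv_half_norm_sq, partialDeriv_coord, Matrix.of_apply,
    Matrix.one_apply]

theorem hessian_posSemidef (hf : ContDiff ℝ ∞ f) (hconv : ConvexOn ℝ univ f)
    (ξ : EuclideanSpace ℝ (Fin n)) : (hessian f ξ).PosSemidef := by
  refine .of_dotProduct_mulVec_nonneg (hessian_isHermitian hf ξ) fun v ↦ ?_
  have hv :
      (WithLp.toLp 2 v : EuclideanSpace ℝ (Fin n)) = ∑ i, v i • EuclideanSpace.single i 1 := by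
    ext j
    simp [Pi.single_apply]
  have hquad : star v ⬝ᵥ (hessian f ξ *ᵥ v)
      = fderiv ℝ (fderiv ℝ f) ξ (WithLp.toLp 2 v) (WithLp.toLp 2 v) := by
    simp only [hv, map_sum, map_smul, dotProduct, Matrix.mulVec, hessian_apply_eq_fderiv_fderiv hf,
      sum_apply, smul_apply, smul_eq_mul, Finset.mul_sum, star_trivial]
    rw [Finset.sum_comm]
    exact Finset.sum_congr rfl fun i _ ↦ Finset.sum_congr rfl fun j _ ↦ by ring
  rw [hquad]
  exact fderiv_fderiv_nonneg_of_convexOn (hf.of_le (by norm_cast)) hconv ξ _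

end PartialDerivatives

section MixedHessian

/-- The Euclidean plane. -/
abbrev Plane := EuclideanSpace ℝ (Fin 2)

/-- The polarisation of the Hessian determinant, `a₁₁ b₂₂ + a₂₂ b₁₁ - 2 a₁₂ b₁₂`, normalised so that
`mixedHessDet a a = 2 * (hessian a).det`. -/
noncomputable def mixedHessDet (a b : Plane → ℝ) (ξ : Plane) : ℝ :=
  hessian a ξ 0 0 * hessian b ξ 1 1 + hessian a ξ 1 1 * hessian b ξ 0 0
    - 2 * hessian a ξ 0 1 * hessian b ξ 0 1

variable {a b c f : Plane → ℝ}

theorem mixedHessDet_comm (a b : Plane → ℝ) : mixedHessDet a b = mixedHessDet b a := by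
  funext ξ
  simp only [mixedHessDet]
  ring

theorem continuous_mixedHessDet (ha : ContDiff ℝ ∞ a) (hb : ContDiff ℝ ∞ b) :
    Continuous (mixedHessDet a b) := by
  have ha' := continuous_hessian_apply ha
  have hb' := continuous_hessian_apply hb
  unfold mixedHessDet
  fun_prop

theorem mixedHessDet_eq_zero_of_notMem_tsupport {ξ : Plane} (hξ : ξ ∉ tsupport b) :
    mixedHessDet a b ξ = 0 := by
  simp [mixedHessDet, hessian_eq_zero_of_notMem_tsupport hξ]

theorem mixedHessDet_eq_zero_of_notMem {S : Set Plane} (hS : IsClosed S)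
    (hb : ∀ ξ ∉ S, b ξ = 0) {ξ : Plane} (hξ : ξ ∉ S) : mixedHessDet a b ξ = 0 :=
  mixedHessDet_eq_zero_of_notMem_tsupport fun h ↦
    hξ (closure_minimal (Function.support_subset_iff'.2 hb) hS h)

theorem hasCompactSupport_mixedHessDet (hb : HasCompactSupport b) :
    HasCompactSupport (mixedHessDet a b) :=
  .intro hb fun _ ↦ mixedHessDet_eq_zero_of_notMem_tsupport

theorem mixedHessDet_const_mul_right (hb : ContDiff ℝ ∞ b) (s : ℝ) (ξ : Plane) :
    mixedHessDet a (fun η ↦ s * b η) ξ = s * mixedHessDet a b ξ := by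
  simp only [mixedHessDet, hessian_const_mul hb, Matrix.smul_apply, smul_eq_mul]
  ring

theorem mixedHessDet_affine_add_right (hb : ContDiff ℝ ∞ b) (α : ℝ) (q ξ : Plane) :
    mixedHessDet a (fun η ↦ α + ⟪q, η⟫_ℝ + b η) ξ = mixedHessDet a b ξ := by
  have hq : ContDiff ℝ ∞ fun η ↦ α + ⟪q, η⟫_ℝ :=
    contDiff_const.add (innerSL ℝ q).contDiff
  simp only [mixedHessDet, hessian_add hq hb, hessian_affine, zero_add]

theorem mixedHessDet_half_norm_sq (a : Plane → ℝ) (ξ : Plane) :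
    mixedHessDet a (fun η ↦ 1 / 2 * ‖η‖ ^ 2) ξ = (hessian a ξ).trace := by
  simp only [mixedHessDet, hessian_half_norm_sq]
  simp [Matrix.trace_fin_two]

theorem det_hessian_sub_det_hessian (ha : ContDiff ℝ ∞ a) (hb : ContDiff ℝ ∞ b) (ξ : Plane) :
    (hessian a ξ).det - (hessian b ξ).det
      = 1 / 2 * mixedHessDet (fun η ↦ a η - b η) (fun η ↦ a η + b η) ξ := by
  have hsymm {h : Plane → ℝ} (hh : ContDiff ℝ ∞ h) : hessian h ξ 1 0 = hessian h ξ 0 1 :=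
    (hessian_isHermitian hh ξ).apply 0 1
  simp only [mixedHessDet, hessian_sub ha hb, hessian_add ha hb, Matrix.det_fin_two, hsymm ha,
    hsymm hb, Matrix.add_apply, Matrix.sub_apply]
  ring

theorem abs_mixedHessDet_le (hf : ContDiff ℝ ∞ f) (hconv : ConvexOn ℝ univ f) {ξ : Plane} {C : ℝ}
    (hC : ∀ i j, |hessian a ξ i j| ≤ C) :
    |mixedHessDet a f ξ| ≤ 2 * C * (hessian f ξ).trace := by
  have hpsd := hessian_posSemidef hf hconv ξ
  have h0 : 0 ≤ hessian f ξ 0 0 := hpsd.diag_nonneg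
  have h1 : 0 ≤ hessian f ξ 1 1 := hpsd.diag_nonneg
  have hsymm : hessian f ξ 1 0 = hessian f ξ 0 1 := hpsd.isHermitian.apply 0 1
  have hplus := hpsd.dotProduct_mulVec_nonneg ![1, 1]
  have hminus := hpsd.dotProduct_mulVec_nonneg ![1, -1]
  simp only [Matrix.mulVec, dotProduct, Fin.sum_univ_two, star_trivial, Matrix.cons_val_zero,
    Matrix.cons_val_one, hsymm] at hplus hminus
  have hoff : |2 * hessian f ξ 0 1| ≤ hessian f ξ 0 0 + hessian f ξ 1 1 :=
    abs_le.2 ⟨by linarith, by linarith⟩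
  calc |mixedHessDet a f ξ|
      ≤ |hessian a ξ 0 0| * hessian f ξ 1 1 + |hessian a ξ 1 1| * hessian f ξ 0 0
          + |hessian a ξ 0 1| * |2 * hessian f ξ 0 1| := by
        rw [mixedHessDet]
        refine (abs_sub _ _).trans (add_le_add ((abs_add_le _ _).trans_eq ?_) (le_of_eq ?_))
        · rw [abs_mul, abs_mul, abs_of_nonneg h0, abs_of_nonneg h1]
        · rw [← abs_mul]
          ring_nf
    _ ≤ C * hessian f ξ 1 1 + C * hessian f ξ 0 0 + C * (hessian f ξ 0 0 + hessian f ξ 1 1) := by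
        have hC0 : 0 ≤ C := (abs_nonneg _).trans (hC 0 0)
        gcongr <;> exact hC _ _
    _ = 2 * C * (hessian f ξ).trace := by
        rw [Matrix.trace_fin_two]
        ring

/-- A component of the vector field `adj(D²c) (b ∇a - a ∇b)`, for `j ≠ i`; its divergence is the
integrand of the symmetry `∫ b [a, c] = ∫ a [b, c]` of the mixed Hessian determinant. -/
noncomputable def hessFlux (a b c : Plane → ℝ) (i j : Fin 2) (ξ : Plane) : ℝ :=
  (b ξ * partialDeriv i a ξ - a ξ * partialDeriv i b ξ) * partialDeriv j (partialDeriv j c) ξ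
    - (b ξ * partialDeriv j a ξ - a ξ * partialDeriv j b ξ) * partialDeriv i (partialDeriv j c) ξ

theorem contDiff_hessFlux (ha : ContDiff ℝ ∞ a) (hb : ContDiff ℝ ∞ b) (hc : ContDiff ℝ ∞ c)
    (i j : Fin 2) : ContDiff ℝ ∞ (hessFlux a b c i j) := by
  have hpa := contDiff_partialDeriv ha
  have hpb := contDiff_partialDeriv hb
  have hpc (i : Fin 2) := contDiff_partialDeriv (contDiff_partialDeriv hc j) i
  unfold hessFlux
  fun_prop

theorem hasCompactSupport_hessFlux (ha : HasCompactSupport a) (i j : Fin 2) :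
    HasCompactSupport (hessFlux a b c i j) := by
  have hpa (k : Fin 2) : HasCompactSupport (partialDeriv k a) := ha.fderiv_apply ℝ _
  exact ((hpa i).mul_left.sub ha.mul_right).mul_right.sub
    ((hpa j).mul_left.sub ha.mul_right).mul_right

theorem divergence_hessFlux (ha : ContDiff ℝ ∞ a) (hb : ContDiff ℝ ∞ b) (hc : ContDiff ℝ ∞ c)
    (ξ : Plane) :
    partialDeriv 0 (hessFlux a b c 0 1) ξ + partialDeriv 1 (hessFlux a b c 1 0) ξ
      = b ξ * mixedHessDet a c ξ - a ξ * mixedHessDet b c ξ := by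
  have diff {f : Plane → ℝ} (hf : ContDiff ℝ ∞ f) : Differentiable ℝ f :=
    hf.differentiable (by simp)
  have hw (i : Fin 2) : ContDiff ℝ ∞ fun ξ ↦ b ξ * partialDeriv i a ξ - a ξ * partialDeriv i b ξ :=
    (hb.mul (contDiff_partialDeriv ha i)).sub (ha.mul (contDiff_partialDeriv hb i))
  have hc₂ (i j : Fin 2) : ContDiff ℝ ∞ (partialDeriv i (partialDeriv j c)) :=
    contDiff_partialDeriv (contDiff_partialDeriv hc j) i
  have hdw (i j : Fin 2) :
      partialDeriv j (fun ξ ↦ b ξ * partialDeriv i a ξ - a ξ * partialDeriv i b ξ) ξ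
        = partialDeriv j b ξ * partialDeriv i a ξ + b ξ * partialDeriv j (partialDeriv i a) ξ
          - (partialDeriv j a ξ * partialDeriv i b ξ
            + a ξ * partialDeriv j (partialDeriv i b) ξ) := by
    have hpa := contDiff_partialDeriv ha i
    have hpb := contDiff_partialDeriv hb i
    rw [partialDeriv_sub (diff (hb.mul hpa)) (diff (ha.mul hpb)),
      partialDeriv_mul (diff hb) (diff hpa), partialDeriv_mul (diff ha) (diff hpb)]
  have hflux (i j : Fin 2) : partialDeriv i (hessFlux a b c i j) ξ
      = (partialDeriv i (fun ξ ↦ b ξ * partialDeriv i a ξ - a ξ * partialDeriv i b ξ) ξ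
            * partialDeriv j (partialDeriv j c) ξ
          + (b ξ * partialDeriv i a ξ - a ξ * partialDeriv i b ξ)
            * partialDeriv i (partialDeriv j (partialDeriv j c)) ξ)
        - (partialDeriv i (fun ξ ↦ b ξ * partialDeriv j a ξ - a ξ * partialDeriv j b ξ) ξ
            * partialDeriv i (partialDeriv j c) ξ
          + (b ξ * partialDeriv j a ξ - a ξ * partialDeriv j b ξ)
            * partialDeriv i (partialDeriv i (partialDeriv j c)) ξ) := by
    unfold hessFlux
    rw [partialDeriv_sub (diff ((hw i).mul (hc₂ j j))) (diff ((hw j).mul (hc₂ i j))),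
      partialDeriv_mul (diff (hw i)) (diff (hc₂ j j)),
      partialDeriv_mul (diff (hw j)) (diff (hc₂ i j))]
  rw [hflux, hflux, hdw, hdw, hdw, hdw]
  simp only [mixedHessDet, hessian, Matrix.of_apply, partialDeriv_comm ha 1 0,
    partialDeriv_comm hb 1 0, partialDeriv_comm hc 1 0,
    partialDeriv_comm (contDiff_partialDeriv hc 1) 1 0,
    partialDeriv_comm (contDiff_partialDeriv hc 0) 1 0]
  ring

theorem integral_mul_mixedHessDet_comm (ha : ContDiff ℝ ∞ a) (hb : ContDiff ℝ ∞ b)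
    (hc : ContDiff ℝ ∞ c) (hsupp : HasCompactSupport a) :
    ∫ ξ, b ξ * mixedHessDet a c ξ = ∫ ξ, a ξ * mixedHessDet b c ξ := by
  have hflux (i j : Fin 2) := contDiff_hessFlux ha hb hc i j
  have hflux_supp (i j : Fin 2) := hasCompactSupport_hessFlux (b := b) (c := c) hsupp i j
  have hint (i j : Fin 2) : Integrable (partialDeriv i (hessFlux a b c i j)) :=
    (contDiff_partialDeriv (hflux i j) i).continuous.integrable_of_hasCompactSupport
      ((hflux_supp i j).fderiv_apply ℝ _)
  have hint_a : Integrable fun ξ ↦ a ξ * mixedHessDet b c ξ :=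
    (ha.continuous.mul (continuous_mixedHessDet hb hc)).integrable_of_hasCompactSupport
      hsupp.mul_right
  have hint_b : Integrable fun ξ ↦ b ξ * mixedHessDet a c ξ :=
    (hb.continuous.mul (continuous_mixedHessDet ha hc)).integrable_of_hasCompactSupport
      (mixedHessDet_comm a c ▸ hasCompactSupport_mixedHessDet hsupp).mul_left
  rw [← sub_eq_zero, ← integral_sub hint_b hint_a]
  simp_rw [← divergence_hessFlux ha hb hc]
  rw [integral_add (hint 0 1) (hint 1 0),
    integral_partialDeriv_eq_zero (hflux 0 1) (hflux_supp 0 1),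
    integral_partialDeriv_eq_zero (hflux 1 0) (hflux_supp 1 0), add_zero]

theorem continuous_trace_hessian (hf : ContDiff ℝ ∞ f) :
    Continuous fun ξ ↦ (hessian f ξ).trace := by
  simp only [← mixedHessDet_half_norm_sq]
  exact continuous_mixedHessDet hf (contDiff_const.mul (contDiff_norm_sq ℝ))

theorem exists_setIntegral_trace_hessian_le (c : Plane) (r : ℝ) :
    ∃ C, ∀ (P : Plane → ℝ) (B : ℝ), ContDiff ℝ ∞ P → ConvexOn ℝ univ P →
      (∀ ξ ∈ closedBall c (|r| + 2), |P ξ| ≤ B) →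
      ∫ ξ in closedBall c r, (hessian P ξ).trace ≤ C * B := by
  let ψ : ContDiffBump c := ⟨|r| + 1, |r| + 2, by positivity, by linarith⟩
  have hψ : ContDiff ℝ ∞ ψ := ψ.contDiff
  have hψ_supp : HasCompactSupport fun ξ ↦ (hessian ψ ξ).trace :=
    .intro ψ.hasCompactSupport fun ξ hξ ↦ by simp [hessian_eq_zero_of_notMem_tsupport hξ]
  refine ⟨∫ ξ, |(hessian ψ ξ).trace|, fun P B hP hconv hB ↦ ?_⟩
  have hpos (ξ : Plane) : 0 ≤ (hessian P ξ).trace := (hessian_posSemidef hP hconv ξ).trace_nonneg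
  have hcont := continuous_trace_hessian hP
  calc ∫ ξ in closedBall c r, (hessian P ξ).trace
      = ∫ ξ in closedBall c r, ψ ξ * (hessian P ξ).trace := by
        refine setIntegral_congr_fun measurableSet_closedBall fun ξ hξ ↦ ?_
        have hξ' : ξ ∈ closedBall c (|r| + 1) :=
          closedBall_subset_closedBall (by linarith [le_abs_self r]) hξ
        simp [ψ.one_of_mem_closedBall hξ']
    _ ≤ ∫ ξ, ψ ξ * (hessian P ξ).trace :=
        setIntegral_le_integral
          ((hψ.continuous.mul hcont).integrable_of_hasCompactSupport ψ.hasCompactSupport.mul_right)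
          (ae_of_all _ fun ξ ↦ mul_nonneg ψ.nonneg (hpos ξ))
    _ = ∫ ξ, P ξ * (hessian ψ ξ).trace := by
        simp only [← mixedHessDet_half_norm_sq]
        exact (integral_mul_mixedHessDet_comm hψ hP (contDiff_const.mul (contDiff_norm_sq ℝ))
          ψ.hasCompactSupport).symm
    _ ≤ ∫ ξ, |(hessian ψ ξ).trace| * B := by
        have hψ_cont := continuous_trace_hessian hψ
        refine integral_mono
          ((hP.continuous.mul hψ_cont).integrable_of_hasCompactSupport hψ_supp.mul_left)
          ((hψ_cont.integrable_of_hasCompactSupport hψ_supp).abs.mul_const B) fun ξ ↦ ?_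
        by_cases hξ : ξ ∈ tsupport ψ
        · rw [ψ.tsupport_eq] at hξ
          calc P ξ * (hessian ψ ξ).trace ≤ |P ξ| * |(hessian ψ ξ).trace| :=
                (le_abs_self _).trans_eq (abs_mul _ _)
            _ ≤ |(hessian ψ ξ).trace| * B := by
                rw [mul_comm]
                exact mul_le_mul_of_nonneg_left (hB ξ hξ) (abs_nonneg _)
        · simp [hessian_eq_zero_of_notMem_tsupport hξ]
    _ = (∫ ξ, |(hessian ψ ξ).trace|) * B := integral_mul_const _ _

theorem exists_setIntegral_abs_mixedHessDet_le (ha : ContDiff ℝ ∞ a) (c : Plane) (r : ℝ) :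
    ∃ C, ∀ (P : Plane → ℝ) (B : ℝ), ContDiff ℝ ∞ P → ConvexOn ℝ univ P →
      (∀ ξ ∈ closedBall c (|r| + 2), |P ξ| ≤ B) →
      ∫ ξ in closedBall c r, |mixedHessDet a P ξ| ≤ C * B := by
  have hcpt := isCompact_closedBall c r
  choose A hA using fun i j ↦
    hcpt.exists_bound_of_continuousOn (continuous_hessian_apply ha i j).continuousOn
  obtain ⟨D, hD⟩ := exists_setIntegral_trace_hessian_le c r
  have hA' (i j : Fin 2) : A i j ≤ ∑ k, ∑ l, |A k l| := by
    refine (le_abs_self _).trans ((Finset.single_le_sum (f := fun l ↦ |A i l|)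
      (fun _ _ ↦ abs_nonneg _) (Finset.mem_univ j)).trans ?_)
    exact Finset.single_le_sum (f := fun k ↦ ∑ l, |A k l|)
      (fun _ _ ↦ Finset.sum_nonneg fun _ _ ↦ abs_nonneg _) (Finset.mem_univ i)
  set S := ∑ k, ∑ l, |A k l|
  have hS : 0 ≤ S := Finset.sum_nonneg fun _ _ ↦ Finset.sum_nonneg fun _ _ ↦ abs_nonneg _
  refine ⟨2 * S * D, fun P B hP hconv hB ↦ ?_⟩
  calc ∫ ξ in closedBall c r, |mixedHessDet a P ξ|
      ≤ ∫ ξ in closedBall c r, 2 * S * (hessian P ξ).trace :=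
        setIntegral_mono_on
          ((continuous_mixedHessDet ha hP).abs.continuousOn.integrableOn_compact hcpt)
          (((continuous_trace_hessian hP).const_mul _).continuousOn.integrableOn_compact hcpt)
          measurableSet_closedBall
          fun ξ hξ ↦ abs_mixedHessDet_le hP hconv fun i j ↦ (hA i j ξ hξ).trans (hA' i j)
    _ = 2 * S * ∫ ξ in closedBall c r, (hessian P ξ).trace := integral_const_mul _ _
    _ ≤ 2 * S * (D * B) :=
        mul_le_mul_of_nonneg_left (hD P B hP hconv hB) (mul_nonneg zero_le_two hS)
    _ = 2 * S * D * B := by ring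

end MixedHessian

section GradientHomeomorph

variable {E : Type*} [NormedAddCommGroup E] [InnerProductSpace ℝ E] {p : E → ℝ} {ε : ℝ}

theorem convexOn_add_inner_gradient_le [CompleteSpace E] (hconv : ConvexOn ℝ univ p) {ξ : E}
    (hp : DifferentiableAt ℝ p ξ) (η : E) : p ξ + ⟪∇ p ξ, η - ξ⟫_ℝ ≤ p η := by
  rw [inner_gradient_left]
  exact convexOn_add_fderiv_sub_le hconv (mem_univ ξ) (mem_univ η) hp.hasFDerivAt

theorem strongConvexOn_add_inner_gradient_add_le [CompleteSpace E]
    (hconv : StrongConvexOn univ ε p) {ξ : E} (hp : DifferentiableAt ℝ p ξ) (η : E) :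
    p ξ + ⟪∇ p ξ, η - ξ⟫_ℝ + ε / 2 * ‖η - ξ‖ ^ 2 ≤ p η := by
  have hsq : HasFDerivAt (fun ξ : E ↦ ‖ξ‖ ^ 2) (2 • innerSL ℝ ξ) ξ :=
    (hasStrictFDerivAt_norm_sq ξ).hasFDerivAt
  have hle := convexOn_add_fderiv_sub_le (strongConvexOn_iff_convex.1 hconv) (mem_univ ξ)
    (mem_univ η) (hp.hasFDerivAt.sub (hsq.const_mul (ε / 2)))
  rw [inner_gradient_left, norm_sub_sq_real]
  simp only [sub_apply, smul_apply, nsmul_eq_mul, innerSL_apply_apply, smul_eq_mul,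
    inner_sub_right, real_inner_self_eq_norm_sq, Nat.cast_ofNat] at hle
  rw [real_inner_comm] at hle
  linarith

theorem mul_norm_sub_le_norm_gradient_sub [CompleteSpace E] (hconv : StrongConvexOn univ ε p)
    (hp : Differentiable ℝ p) (ξ η : E) : ε * ‖ξ - η‖ ≤ ‖∇ p ξ - ∇ p η‖ := by
  have hξ := strongConvexOn_add_inner_gradient_add_le hconv (hp ξ) η
  have hη := strongConvexOn_add_inner_gradient_add_le hconv (hp η) ξ
  have hmono : ε * ‖ξ - η‖ ^ 2 ≤ ⟪∇ p ξ - ∇ p η, ξ - η⟫_ℝ := by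
    rw [← neg_sub ξ η, inner_neg_right, norm_neg] at hξ
    rw [inner_sub_left]
    linarith
  obtain h | h := (norm_nonneg (ξ - η)).eq_or_lt
  · simp [← h]
  · exact le_of_mul_le_mul_right
      ((by ring : ε * ‖ξ - η‖ * ‖ξ - η‖ = ε * ‖ξ - η‖ ^ 2).trans_le
        (hmono.trans (real_inner_le_norm _ _))) h

theorem exists_forall_add_inner_le [ProperSpace E] (hconv : StrongConvexOn univ ε p) (hε : 0 < ε)
    (hp : Differentiable ℝ p) (x : E) : ∃ ξ, ∀ η, p ξ + ⟪ξ, x⟫_ℝ ≤ p η + ⟪η, x⟫_ℝ := by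
  refine (hp.continuous.add (by fun_prop)).exists_forall_le
    (tendsto_atTop_mono (f := fun ξ ↦ ‖ξ‖ * (ε / 2 * ‖ξ‖ - (‖∇ p 0‖ + ‖x‖)) + p 0) (fun ξ ↦ ?_) ?_)
  · have hle := strongConvexOn_add_inner_gradient_add_le hconv (hp 0) ξ
    rw [sub_zero] at hle
    have hgrad := (abs_le.1 (abs_real_inner_le_norm (∇ p 0) ξ)).1
    have hx := (abs_le.1 (abs_real_inner_le_norm ξ x)).1
    simp only [Pi.add_apply]
    linarith
  · have hnorm := tendsto_norm_cocompact_atTop (E := E)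
    exact tendsto_atTop_add_const_right _ _ (hnorm.atTop_mul_atTop₀
      (tendsto_atTop_add_const_right _ _ (hnorm.const_mul_atTop (by positivity))))

theorem gradient_eq_neg_of_forall_add_inner_le [CompleteSpace E] {ξ x : E}
    (hp : DifferentiableAt ℝ p ξ) (hmin : ∀ η, p ξ + ⟪ξ, x⟫_ℝ ≤ p η + ⟪η, x⟫_ℝ) :
    ∇ p ξ = -x := by
  have hinner : HasFDerivAt (fun η : E ↦ ⟪η, x⟫_ℝ) (innerSL ℝ x) ξ := by
    simpa only [real_inner_comm] using! (innerSL ℝ x).hasFDerivAt (x := ξ)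
  have hlocal : IsLocalMin (fun η ↦ p η + ⟪η, x⟫_ℝ) ξ := Eventually.of_forall hmin
  have hzero := hlocal.hasFDerivAt_eq_zero (hp.hasFDerivAt.add hinner)
  refine ext_inner_right ℝ fun v ↦ ?_
  have hv := DFunLike.congr_fun hzero v
  simp only [add_apply, innerSL_apply_apply, zero_apply] at hv
  rw [inner_gradient_left, inner_neg_left]
  linarith

theorem exists_homeomorph_eq_neg_gradient [ProperSpace E] (hconv : StrongConvexOn univ ε p)
    (hε : 0 < ε) (hp : ContDiff ℝ 1 p) : ∃ Φ : E ≃ₜ E, ∀ ξ, Φ ξ = -∇ p ξ := by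
  have hdiff := hp.differentiable one_ne_zero
  have hcont : Continuous fun ξ ↦ -∇ p ξ :=
    ((toDual ℝ E).symm.continuous.comp (hp.continuous_fderiv one_ne_zero)).neg
  have hanti : AntilipschitzWith (Real.toNNReal ε⁻¹) fun ξ ↦ -∇ p ξ := by
    refine AntilipschitzWith.of_le_mul_dist fun ξ η ↦ ?_
    rw [Real.coe_toNNReal _ (by positivity), dist_neg_neg, dist_eq_norm, dist_eq_norm,
      inv_mul_eq_div, le_div_iff₀' hε]
    exact mul_norm_sub_le_norm_gradient_sub hconv hdiff ξ η
  have hsurj : Function.Surjective fun ξ ↦ -∇ p ξ := fun x ↦ by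
    obtain ⟨ξ, hξ⟩ := exists_forall_add_inner_le hconv hε hdiff x
    exact ⟨ξ, by simp [gradient_eq_neg_of_forall_add_inner_le (hdiff ξ) hξ]⟩
  let e := Equiv.ofBijective _ ⟨hanti.injective, hsurj⟩
  exact ⟨⟨e, hcont, (hanti.to_rightInverse e.right_inv).continuous⟩, fun _ ↦ rfl⟩

theorem add_inner_le_of_neg_gradient [CompleteSpace E] {Φ : E ≃ₜ E} (hΦ : ∀ ξ, Φ ξ = -∇ p ξ)
    (hconv : ConvexOn ℝ univ p) (hp : Differentiable ℝ p) (x η : E) :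
    p (Φ.symm x) + ⟪Φ.symm x, x⟫_ℝ ≤ p η + ⟪η, x⟫_ℝ := by
  have hle := convexOn_add_inner_gradient_le hconv (hp (Φ.symm x)) η
  have hx : ∇ p (Φ.symm x) = -x := by rw [← neg_neg (∇ p _), ← hΦ, Φ.apply_symm_apply]
  rw [hx, inner_neg_left, inner_sub_right, real_inner_comm, real_inner_comm (Φ.symm x)] at hle
  linarith

theorem hasFDerivAt_gradient [CompleteSpace E] (hp : ContDiff ℝ 2 p) (ξ : E) :
    HasFDerivAt (∇ p) ((toDual ℝ E).symm.toContinuousLinearEquiv.toContinuousLinearMap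
      ∘L fderiv ℝ (fderiv ℝ p) ξ) ξ :=
  (toDual ℝ E).symm.toContinuousLinearEquiv.hasFDerivAt.comp ξ
    ((hp.fderiv_right (m := 1) le_rfl).differentiable one_ne_zero ξ).hasFDerivAt

theorem norm_gradient_le_of_eventually_abs_sub_le [CompleteSpace E] {ξ : E} {ρ : ℝ}
    (hp : DifferentiableAt ℝ p ξ) (hρ : 0 ≤ ρ)
    (h : ∀ᶠ η in 𝓝 ξ, |p η - p ξ| ≤ ρ * ‖η - ξ‖) : ‖∇ p ξ‖ ≤ ρ := by
  rw [gradient, LinearIsometryEquiv.norm_map]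
  exact hp.hasFDerivAt.le_of_lip' hρ (by simpa using h)

end GradientHomeomorph

section ChangeOfVariables

theorem det_fderiv_neg_gradient {p : Plane → ℝ} (hp : ContDiff ℝ ∞ p) (ξ : Plane) :
    (fderiv ℝ (-∇ p) ξ).det = (hessian p ξ).det := by
  have hneg := (hasFDerivAt_gradient (hp.of_le (by norm_cast)) ξ).neg
  set b := EuclideanSpace.basisFun (Fin 2) ℝ
  have hmatrix : LinearMap.toMatrix b.toBasis b.toBasis (fderiv ℝ (-∇ p) ξ)
      = -hessian p ξ := by
    ext i j
    have hcoord (w : Plane) : w i = ⟪w, EuclideanSpace.single i 1⟫_ℝ := by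
      simp [EuclideanSpace.inner_single_right]
    have hentry : hessian p ξ i j = (toDual ℝ Plane).symm
        (fderiv ℝ (fderiv ℝ p) ξ (EuclideanSpace.single j 1)) i := by
      rw [hcoord, toDual_symm_apply, ← hessian_apply_eq_fderiv_fderiv hp]
      exact ((hessian_isHermitian hp ξ).apply i j).symm
    rw [hneg.fderiv]
    simpa [b, LinearMap.toMatrix_apply] using hentry.symm
  rw [ContinuousLinearMap.det, ← LinearMap.det_toMatrix b.toBasis, hmatrix, Matrix.det_neg]
  simp

variable {p p₁ p₂ F : Plane → ℝ} {Φ Φ₁ Φ₂ : Plane ≃ₜ Plane} {c : Plane} {r : ℝ} {S Ω : Set Plane}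

theorem setIntegral_image_neg_gradient (hΦ : ∀ ξ, Φ ξ = -∇ p ξ) (hp : ContDiff ℝ ∞ p)
    (hconv : ConvexOn ℝ univ p) (hS : MeasurableSet S) :
    ∫ x in Φ '' S, F (Φ.symm x) = ∫ ξ in S, F ξ * (hessian p ξ).det := by
  have hdiff (ξ : Plane) : HasFDerivAt Φ (fderiv ℝ (-∇ p) ξ) ξ := by
    have hneg := (hasFDerivAt_gradient (hp.of_le (by norm_cast)) ξ).neg
    exact (show ⇑Φ = -∇ p from funext hΦ) ▸ hneg.differentiableAt.hasFDerivAt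
  rw [integral_image_eq_integral_abs_det_fderiv_smul volume hS
    (fun ξ _ ↦ (hdiff ξ).hasFDerivWithinAt) Φ.injective.injOn]
  refine integral_congr_ae (ae_of_all _ fun ξ ↦ ?_)
  simp only [det_fderiv_neg_gradient hp, Φ.symm_apply_apply, smul_eq_mul,
    abs_of_nonneg (hessian_posSemidef hp hconv ξ).det_nonneg, mul_comm]

theorem image_eq_image_of_eqOn_compl {α β : Type*} {f g : α → β} {s : Set α}
    (hf : Function.Bijective f) (hg : Function.Bijective g) (h : EqOn f g sᶜ) :
    f '' s = g '' s := by
  rw [← compl_inj_iff, ← image_compl_eq hf, ← image_compl_eq hg, h.image_eq]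

theorem setIntegral_comp_symm_sub (hF : Continuous F) (hΩ : MeasurableSet Ω)
    (hS : IsCompact S) (h : EqOn Φ₁ Φ₂ Sᶜ) (hsub : Φ₂ '' S ⊆ Ω) :
    ∫ x in Ω, (F (Φ₁.symm x) - F (Φ₂.symm x))
      = (∫ x in Φ₁ '' S, F (Φ₁.symm x)) - ∫ x in Φ₂ '' S, F (Φ₂.symm x) := by
  have himage : Φ₁ '' S = Φ₂ '' S :=
    image_eq_image_of_eqOn_compl Φ₁.bijective Φ₂.bijective h
  have hint (Φ : Plane ≃ₜ Plane) : IntegrableOn (fun x ↦ F (Φ.symm x)) (Φ₂ '' S) :=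
    (hF.comp Φ.symm.continuous).continuousOn.integrableOn_compact (hS.image Φ₂.continuous)
  rw [himage, ← integral_sub (hint Φ₁) (hint Φ₂)]
  refine setIntegral_eq_of_subset_of_forall_sdiff_eq_zero hΩ hsub fun x hx ↦ ?_
  have hmem : Φ₂.symm x ∉ S := fun hS ↦ hx.2 ⟨_, hS, Φ₂.apply_symm_apply x⟩
  rw [← Φ₁.symm_apply_apply (Φ₂.symm x), h hmem, Φ₂.apply_symm_apply, sub_self]

/-- The variables `p₁ - p₂` and `F` are exchanged by integrating by parts twice. -/
theorem setIntegral_comp_symm_neg_gradient_sub (hΦ₁ : ∀ ξ, Φ₁ ξ = -∇ p₁ ξ)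
    (hΦ₂ : ∀ ξ, Φ₂ ξ = -∇ p₂ ξ) (hp₁ : ContDiff ℝ ∞ p₁) (hp₂ : ContDiff ℝ ∞ p₂)
    (hconv₁ : ConvexOn ℝ univ p₁) (hconv₂ : ConvexOn ℝ univ p₂) (hF : ContDiff ℝ ∞ F)
    (hΩ : MeasurableSet Ω) (heq : ∀ ξ ∉ closedBall c r, p₁ ξ = p₂ ξ)
    (hsub : Φ₂ '' closedBall c r ⊆ Ω) :
    ∫ x in Ω, (F (Φ₁.symm x) - F (Φ₂.symm x))
      = 1 / 2 * ∫ ξ, (p₁ ξ - p₂ ξ) * mixedHessDet F (fun η ↦ p₁ η + p₂ η) ξ := by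
  have hΦ : EqOn Φ₁ Φ₂ (closedBall c r)ᶜ := fun ξ hξ ↦ by
    have hnhds : p₁ =ᶠ[𝓝 ξ] p₂ :=
      eventually_of_mem (isClosed_closedBall.isOpen_compl.mem_nhds hξ) heq
    rw [hΦ₁, hΦ₂, gradient, gradient, hnhds.fderiv_eq]
  have hθ : ContDiff ℝ ∞ fun ξ ↦ p₁ ξ - p₂ ξ := hp₁.sub hp₂
  have hθ0 : ∀ ξ ∉ closedBall c r, p₁ ξ - p₂ ξ = 0 := fun ξ hξ ↦ sub_eq_zero.2 (heq ξ hξ)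
  have hint {p : Plane → ℝ} (hp : ContDiff ℝ ∞ p) :
      IntegrableOn (fun ξ ↦ F ξ * (hessian p ξ).det) (closedBall c r) := by
    have hcont := continuous_hessian_apply hp
    simp only [Matrix.det_fin_two]
    have hF' := hF.continuous
    exact (show Continuous _ by fun_prop).continuousOn.integrableOn_compact
      (isCompact_closedBall c r)
  rw [setIntegral_comp_symm_sub hF.continuous hΩ (isCompact_closedBall c r) hΦ hsub,
    setIntegral_image_neg_gradient hΦ₁ hp₁ hconv₁ measurableSet_closedBall,
    setIntegral_image_neg_gradient hΦ₂ hp₂ hconv₂ measurableSet_closedBall,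
    ← integral_sub (hint hp₁) (hint hp₂)]
  calc ∫ ξ in closedBall c r, F ξ * (hessian p₁ ξ).det - F ξ * (hessian p₂ ξ).det
      = ∫ ξ in closedBall c r,
          1 / 2 * (F ξ * mixedHessDet (fun η ↦ p₁ η - p₂ η) (fun η ↦ p₁ η + p₂ η) ξ) := by
        simp_rw [← mul_sub, det_hessian_sub_det_hessian hp₁ hp₂]
        congr! 2 with ξ
        ring
    _ = 1 / 2 * ∫ ξ, F ξ * mixedHessDet (fun η ↦ p₁ η - p₂ η) (fun η ↦ p₁ η + p₂ η) ξ := by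
        rw [integral_const_mul, setIntegral_eq_integral_of_forall_compl_eq_zero]
        intro ξ hξ
        rw [mixedHessDet_comm, mixedHessDet_eq_zero_of_notMem isClosed_closedBall hθ0 hξ, mul_zero]
    _ = 1 / 2 * ∫ ξ, (p₁ ξ - p₂ ξ) * mixedHessDet F (fun η ↦ p₁ η + p₂ η) ξ := by
        rw [integral_mul_mixedHessDet_comm hθ hF (hp₁.add hp₂)
          (.intro (isCompact_closedBall c r) hθ0)]

end ChangeOfVariables

section Mollification

variable {E : Type*} [NormedAddCommGroup E] [InnerProductSpace ℝ E] [FiniteDimensional ℝ E]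
  [MeasurableSpace E] [BorelSpace E] {f g : E → ℝ} {n : ℕ}

/-- A smooth bump at the origin with support of radius `1 / (n + 1)`. -/
noncomputable def shrinkingBump (E : Type*) [NormedAddCommGroup E] (n : ℕ) :
    ContDiffBump (0 : E) where
  rIn := 1 / (n + 1) / 2
  rOut := 1 / (n + 1)
  rIn_pos := by positivity
  rIn_lt_rOut := half_lt_self (by positivity)

/-- The mollification of `f` at scale `1 / (n + 1)`. -/
noncomputable def mollify (n : ℕ) (f : E → ℝ) : E → ℝ :=
  convolution ((shrinkingBump E n).normed volume) f (ContinuousLinearMap.lsmul ℝ ℝ) volume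

theorem mollify_apply (n : ℕ) (f : E → ℝ) (ξ : E) :
    mollify n f ξ = ∫ t, (shrinkingBump E n).normed volume t * f (ξ - t) := by
  simp [mollify, convolution]

theorem integrable_normed_shrinkingBump_mul (hf : Continuous f) (ξ : E) :
    Integrable fun t ↦ (shrinkingBump E n).normed volume t * f (ξ - t) :=
  ((shrinkingBump E n).continuous_normed.mul (by fun_prop)).integrable_of_hasCompactSupport
    (shrinkingBump E n).hasCompactSupport_normed.mul_right

theorem contDiff_mollify (hf : Continuous f) : ContDiff ℝ ∞ (mollify n f) :=
  (shrinkingBump E n).hasCompactSupport_normed.contDiff_convolution_left _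
    (shrinkingBump E n).contDiff_normed hf.locallyIntegrable

theorem mollify_sub (hf : Continuous f) (hg : Continuous g) (ξ : E) :
    mollify n (fun η ↦ f η - g η) ξ = mollify n f ξ - mollify n g ξ := by
  simp only [mollify_apply, mul_sub]
  exact integral_sub (integrable_normed_shrinkingBump_mul hf ξ)
    (integrable_normed_shrinkingBump_mul hg ξ)

theorem mollify_add_right (f : E → ℝ) (ξ h : E) :
    mollify n f (ξ + h) = mollify n (fun η ↦ f (η + h)) ξ := by
  simp only [mollify_apply, add_sub_right_comm]

theorem mollify_nonneg (hf : 0 ≤ f) : 0 ≤ mollify n f := fun ξ ↦ by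
  rw [mollify_apply]
  exact integral_nonneg fun t ↦ mul_nonneg ((shrinkingBump E n).nonneg_normed t) (hf _)

theorem abs_mollify_sub_le (hf : Continuous f) {ξ : E} {a b : ℝ}
    (h : ∀ η ∈ ball ξ (1 / (n + 1)), |f η - a| ≤ b) : |mollify n f ξ - a| ≤ b := by
  rw [← Real.dist_eq]
  exact dist_convolution_le (R := 1 / (n + 1))
    ((abs_nonneg _).trans (h ξ (mem_ball_self (by positivity))))
    (shrinkingBump E n).support_normed_eq.subset (shrinkingBump E n).nonneg_normed
    (shrinkingBump E n).integral_normed hf.aestronglyMeasurable h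

theorem convexOn_mollify (hf : ConvexOn ℝ univ f) : ConvexOn ℝ univ (mollify n f) := by
  have hcont : Continuous f := continuousOn_univ.1 (hf.continuousOn isOpen_univ)
  have hint := integrable_normed_shrinkingBump_mul (n := n) hcont
  refine ⟨convex_univ, fun ξ _ η _ a b ha hb hab ↦ ?_⟩
  simp only [mollify_apply, smul_eq_mul]
  rw [← integral_const_mul, ← integral_const_mul,
    ← integral_add ((hint ξ).const_mul a) ((hint η).const_mul b)]
  refine integral_mono (hint _) (((hint ξ).const_mul a).add ((hint η).const_mul b)) fun t ↦ ?_
  have hcomb : a • ξ + b • η - t = a • (ξ - t) + b • (η - t) := by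
    rw [smul_sub, smul_sub, sub_add_sub_comm, ← add_smul, hab, one_smul]
  have hle := hf.2 (mem_univ (ξ - t)) (mem_univ (η - t)) ha hb hab
  rw [← hcomb, smul_eq_mul, smul_eq_mul] at hle
  have hmul := mul_le_mul_of_nonneg_left hle ((shrinkingBump E n).nonneg_normed (μ := volume) t)
  beta_reduce
  linarith

theorem eventually_one_div_add_one_lt {d : ℝ} (hd : 0 < d) :
    ∀ᶠ n : ℕ in atTop, 1 / ((n : ℝ) + 1) < d :=
  tendsto_one_div_add_atTop_nhds_zero_nat.eventually_lt_const hd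

theorem tendstoUniformly_mollify (hf : UniformContinuous f) :
    TendstoUniformly (fun n ↦ mollify n f) f atTop := by
  rw [Metric.tendstoUniformly_iff]
  intro ε hε
  obtain ⟨d, hd, hdε⟩ := Metric.uniformContinuous_iff.1 hf (ε / 2) (half_pos hε)
  filter_upwards [eventually_one_div_add_one_lt hd] with n hn ξ
  have hle : |mollify n f ξ - f ξ| ≤ ε / 2 := abs_mollify_sub_le hf.continuous fun η hη ↦
    (hdε ((mem_ball.1 hη).trans hn)).le
  rw [dist_comm, Real.dist_eq]
  exact hle.trans_lt (half_lt_self hε)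

theorem eventually_mollify_eq_zero {c : E} {r s : ℝ} (hf : Continuous f) (hrs : r < s)
    (h : ∀ ξ ∉ closedBall c r, f ξ = 0) :
    ∀ᶠ n in atTop, ∀ ξ ∉ closedBall c s, mollify n f ξ = 0 := by
  filter_upwards [eventually_one_div_add_one_lt (sub_pos.2 hrs)] with n hn ξ hξ
  suffices hle : |mollify n f ξ - 0| ≤ 0 by simpa using hle
  refine abs_mollify_sub_le hf fun η hη ↦ ?_
  have hη' : η ∉ closedBall c r := fun hηr ↦ hξ <| mem_closedBall.2 <| by
    linarith [dist_triangle_left ξ c η, mem_ball.1 hη, mem_closedBall.1 hηr]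
  simp [h η hη']

theorem eventually_norm_gradient_mollify_le {c : E} {s R ρ : ℝ} (hf : Continuous f) (hρ : 0 ≤ ρ)
    (hsR : s < R) (hlip : ∀ ξ ∈ closedBall c R, ∀ η ∈ closedBall c R, |f ξ - f η| ≤ ρ * ‖ξ - η‖) :
    ∀ᶠ n in atTop, ∀ ξ ∈ closedBall c s, ‖∇ (mollify n f) ξ‖ ≤ ρ := by
  have hd : 0 < (R - s) / 2 := half_pos (sub_pos.2 hsR)
  filter_upwards [eventually_one_div_add_one_lt hd] with n hn ξ hξ
  refine norm_gradient_le_of_eventually_abs_sub_le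
    ((contDiff_mollify hf).differentiable (by simp) ξ) hρ ?_
  filter_upwards [ball_mem_nhds ξ hd] with η hη
  have hshift : Continuous fun ζ ↦ f (ζ + (η - ξ)) := by fun_prop
  have hdiff : mollify n f η - mollify n f ξ = mollify n (fun ζ ↦ f (ζ + (η - ξ)) - f ζ) ξ := by
    rw [mollify_sub hshift hf, ← mollify_add_right, add_sub_cancel]
  rw [hdiff, ← sub_zero (mollify n _ ξ)]
  refine abs_mollify_sub_le (hshift.sub hf) fun ζ hζ ↦ ?_
  rw [mem_ball] at hζ hη
  rw [mem_closedBall] at hξ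
  rw [dist_eq_norm] at hη
  have hζc : dist ζ c ≤ s + (R - s) / 2 := by linarith [dist_triangle ζ ξ c]
  have hshift_dist : dist (ζ + (η - ξ)) ζ = ‖η - ξ‖ := by simp [dist_eq_norm]
  have hlip' := hlip (ζ + (η - ξ)) (mem_closedBall.2 (by
    linarith [dist_triangle (ζ + (η - ξ)) ζ c])) ζ (mem_closedBall.2 (by linarith))
  simpa only [Pi.sub_apply, sub_zero, add_sub_cancel_left] using hlip'

/-- The mollification of `f` made strongly convex, for convex `f`, by adding a small multiple of
the squared norm. -/
noncomputable def regularize (n : ℕ) (f : E → ℝ) (ξ : E) : ℝ :=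
  mollify n f ξ + 1 / (n + 1) / 2 * ‖ξ‖ ^ 2

theorem contDiff_regularize (hf : Continuous f) : ContDiff ℝ ∞ (regularize n f) :=
  (contDiff_mollify hf).add (contDiff_const.mul (contDiff_norm_sq ℝ))

theorem strongConvexOn_regularize (hf : ConvexOn ℝ univ f) :
    StrongConvexOn univ (1 / ((n : ℝ) + 1)) (regularize n f) := by
  rw [strongConvexOn_iff_convex]
  simpa only [regularize, add_sub_cancel_right] using! convexOn_mollify hf

theorem convexOn_regularize (hf : ConvexOn ℝ univ f) : ConvexOn ℝ univ (regularize n f) :=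
  (strongConvexOn_regularize hf).convexOn fun _ ↦ by positivity

theorem regularize_sub_regularize (hf : Continuous f) (hg : Continuous g) (ξ : E) :
    regularize n f ξ - regularize n g ξ = mollify n (fun η ↦ f η - g η) ξ := by
  rw [mollify_sub hf hg, regularize, regularize, add_sub_add_right_eq_sub]

theorem gradient_regularize (hf : Continuous f) (ξ : E) :
    ∇ (regularize n f) ξ = ∇ (mollify n f) ξ + (1 / ((n : ℝ) + 1)) • ξ := by
  have hmoll := ((contDiff_mollify (n := n) hf).differentiable (by simp) ξ).hasFDerivAt
  have hsq : HasFDerivAt (fun η : E ↦ ‖η‖ ^ 2) (2 • innerSL ℝ ξ) ξ :=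
    (hasStrictFDerivAt_norm_sq ξ).hasFDerivAt
  have hsum : HasFDerivAt (regularize n f) _ ξ :=
    hmoll.add (hsq.const_mul (1 / ((n : ℝ) + 1) / 2))
  refine ext_inner_right ℝ fun v ↦ ?_
  rw [inner_add_left, inner_gradient_left, inner_gradient_left, real_inner_smul_left, hsum.fderiv]
  simp only [add_apply, smul_apply, innerSL_apply_apply, nsmul_eq_mul, smul_eq_mul]
  push_cast
  ring

theorem eventually_sub_le_regularize (hf : UniformContinuous f) {ε : ℝ} (hε : 0 < ε) :
    ∀ᶠ n in atTop, ∀ ξ, f ξ - ε ≤ regularize n f ξ := by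
  filter_upwards [Metric.tendstoUniformly_iff.1 (tendstoUniformly_mollify hf) ε hε] with n hn ξ
  have hle := (abs_lt.1 (hn ξ)).2
  have hsq : 0 ≤ 1 / ((n : ℝ) + 1) / 2 * ‖ξ‖ ^ 2 := by positivity
  rw [regularize]
  linarith

theorem tendstoUniformlyOn_regularize (hf : UniformContinuous f) (c : E) (s : ℝ) :
    TendstoUniformlyOn (fun n ↦ regularize n f) f atTop (closedBall c s) := by
  have hlim : Tendsto (fun n : ℕ ↦ 1 / ((n : ℝ) + 1) / 2 * (‖c‖ + s) ^ 2) atTop (𝓝 0) := by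
    simpa using (tendsto_one_div_add_atTop_nhds_zero_nat.div_const 2).mul_const ((‖c‖ + s) ^ 2)
  rw [Metric.tendstoUniformlyOn_iff]
  intro ε hε
  filter_upwards [Metric.tendstoUniformly_iff.1 (tendstoUniformly_mollify hf) (ε / 2) (half_pos hε),
    hlim.eventually_lt_const (half_pos hε)] with n hmoll hsmall ξ hξ
  have hsq : 1 / ((n : ℝ) + 1) / 2 * ‖ξ‖ ^ 2 ≤ 1 / ((n : ℝ) + 1) / 2 * (‖c‖ + s) ^ 2 := by
    gcongr
    exact norm_le_norm_add_const_of_dist_le (mem_closedBall.1 hξ)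
  have hpos : 0 ≤ 1 / ((n : ℝ) + 1) / 2 * ‖ξ‖ ^ 2 := by positivity
  have hlt := abs_lt.1 (hmoll ξ)
  rw [Real.dist_eq, regularize, abs_lt]
  constructor <;> linarith

theorem eventually_norm_gradient_regularize_lt_one {c : E} {s R ρ : ℝ} (hf : Continuous f)
    (hρ : 0 ≤ ρ) (hρ1 : ρ < 1) (hsR : s < R)
    (hlip : ∀ ξ ∈ closedBall c R, ∀ η ∈ closedBall c R, |f ξ - f η| ≤ ρ * ‖ξ - η‖) :
    ∀ᶠ n in atTop, ∀ ξ ∈ closedBall c s, ‖∇ (regularize n f) ξ‖ < 1 := by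
  have hlim : Tendsto (fun n : ℕ ↦ ρ + 1 / ((n : ℝ) + 1) * (‖c‖ + s)) atTop (𝓝 ρ) := by
    simpa using (tendsto_one_div_add_atTop_nhds_zero_nat.mul_const (‖c‖ + s)).const_add ρ
  filter_upwards [eventually_norm_gradient_mollify_le hf hρ hsR hlip,
    hlim.eventually_lt_const hρ1] with n hgrad hlt ξ hξ
  rw [gradient_regularize hf]
  refine (norm_add_le_of_le (hgrad ξ hξ) ?_).trans_lt hlt
  rw [norm_smul, Real.norm_of_nonneg (by positivity)]
  gcongr
  exact norm_le_norm_add_const_of_dist_le (mem_closedBall.1 hξ)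

end Mollification

section ConcaveConjugate

variable {E : Type*} [NormedAddCommGroup E] [InnerProductSpace ℝ E] {Ω : Set E} {g u : E → ℝ}

/-- `u` is the concave conjugate `x ↦ ⨅ ξ, g ξ + ⟪ξ, x⟫` of `g` on `Ω`, except that the infimum
only has to be as small as `u x` where `u` is differentiable, which for concave `u` is almost
everywhere. -/
structure IsConcaveConjugateOn (Ω : Set E) (g u : E → ℝ) : Prop where
  le_add_inner : ∀ x ∈ Ω, ∀ ξ, u x ≤ g ξ + ⟪ξ, x⟫_ℝ
  exists_add_inner_lt : ∀ x ∈ Ω, DifferentiableAt ℝ u x → ∀ ε > 0, ∃ ξ, g ξ + ⟪ξ, x⟫_ℝ < u x + ε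

theorem exists_forall_norm_sub_gradient_le [CompleteSpace E] {x : E} (hΩ : Ω ∈ 𝓝 x)
    (hu : DifferentiableAt ℝ u x) {ε : ℝ} (hε : 0 < ε) :
    ∃ δ > 0, ∀ ξ a, (∀ y ∈ Ω, u y ≤ a + ⟪ξ, y⟫_ℝ) → a + ⟪ξ, x⟫_ℝ ≤ u x + δ →
      ‖ξ - ∇ u x‖ ≤ ε := by
  have hlittle := (hasGradientAt_iff_isLittleO.1 hu.hasGradientAt).def (half_pos hε)
  obtain ⟨d, hd, hball⟩ := Metric.eventually_nhds_iff.1 (hlittle.and hΩ)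
  refine ⟨ε * d / 4, by positivity, fun ξ a hle hnear ↦ ?_⟩
  by_contra! hlt
  set w := ξ - ∇ u x with hw
  have hw0 : 0 < ‖w‖ := hε.trans hlt
  set h := (-(d / 2 / ‖w‖)) • w with hh
  have hnorm : ‖h‖ = d / 2 := by
    rw [hh, norm_smul, norm_neg, Real.norm_of_nonneg (by positivity), div_mul_cancel₀ _ hw0.ne']
  have hinner : ⟪w, h⟫_ℝ = -(d / 2 * ‖w‖) := by
    rw [hh, real_inner_smul_right, real_inner_self_eq_norm_sq]
    field_simp
  obtain ⟨hlow, hmem⟩ := hball (y := x + h) (by rw [dist_self_add_left, hnorm]; linarith)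
  have hup := hle (x + h) hmem
  rw [add_sub_cancel_left, hnorm, Real.norm_eq_abs] at hlow
  rw [inner_add_right] at hup
  rw [hw, inner_sub_left] at hinner
  nlinarith [(abs_le.1 hlow).1]

theorem eq_gradient_of_forall_le_add_inner [CompleteSpace E] {x ξ : E} {a : ℝ}
    (hΩ : Ω ∈ 𝓝 x) (hu : DifferentiableAt ℝ u x)
    (hle : ∀ y ∈ Ω, u y ≤ a + ⟪ξ, y⟫_ℝ) (hx : a + ⟪ξ, x⟫_ℝ ≤ u x) : ξ = ∇ u x :=
  eq_of_forall_dist_le fun ε hε ↦ by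
    obtain ⟨δ, hδ, hnear⟩ := exists_forall_norm_sub_gradient_le hΩ hu hε
    rw [dist_eq_norm]
    exact hnear ξ a hle (by linarith)

theorem ae_differentiableAt_of_concaveOn [FiniteDimensional ℝ E] [MeasurableSpace E]
    [BorelSpace E] (hu : ConcaveOn ℝ Ω u) (hΩ : IsOpen Ω) :
    ∀ᵐ x ∂volume.restrict Ω, DifferentiableAt ℝ u x := by
  rw [ae_restrict_iff' hΩ.measurableSet]
  refine measure_null_of_locally_null _ fun x hx ↦ ?_
  obtain ⟨hxΩ, -⟩ := Classical.not_imp.1 hx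
  obtain ⟨C, t, ht, hlip⟩ := hu.locallyLipschitzOn hΩ hxΩ
  rw [hΩ.nhdsWithin_eq hxΩ, ← interior_mem_nhds] at ht
  refine ⟨_, inter_mem self_mem_nhdsWithin (mem_nhdsWithin_of_mem_nhds ht), ?_⟩
  have hdiff := (ae_restrict_iff' isOpen_interior.measurableSet).1 <|
    (hlip.mono interior_subset).ae_differentiableWithinAt (μ := volume)
      isOpen_interior.measurableSet
  refine measure_mono_null (fun y hy ↦ ?_) (ae_iff.1 hdiff)
  exact fun hdiffy ↦ hy.1 fun _ ↦ (hdiffy hy.2).differentiableAt (isOpen_interior.mem_nhds hy.2)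

section Regularize

variable [FiniteDimensional ℝ E] [MeasurableSpace E] [BorelSpace E]

theorem tendsto_symm_neg_gradient_regularize {x : E} (hg : ConvexOn ℝ univ g)
    (hgu : UniformContinuous g) (hconj : IsConcaveConjugateOn Ω g u) (hΩ : Ω ∈ 𝓝 x)
    (hu : DifferentiableAt ℝ u x) {Φ : ℕ → E ≃ₜ E}
    (hΦ : ∀ n ξ, Φ n ξ = -∇ (regularize n g) ξ) :
    Tendsto (fun n ↦ (Φ n).symm x) atTop (𝓝 (∇ u x)) := by
  rw [tendsto_iff_norm_sub_tendsto_zero]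
  refine tendsto_order.2 ⟨fun b hb ↦ .of_forall fun n ↦ hb.trans_le (norm_nonneg _),
    fun ε hε ↦ ?_⟩
  obtain ⟨δ, hδ, hnear⟩ := exists_forall_norm_sub_gradient_le hΩ hu (half_pos hε)
  obtain ⟨ξ, hξ⟩ := hconj.exists_add_inner_lt x (mem_of_mem_nhds hΩ) hu (δ / 3) (by positivity)
  have hlim := (tendstoUniformlyOn_regularize hgu ξ 0).tendsto_at (mem_closedBall_self le_rfl)
  filter_upwards [eventually_sub_le_regularize hgu (show 0 < δ / 3 by positivity),
    hlim.eventually_lt_const (show g ξ < g ξ + δ / 3 by linarith)] with n hlow hup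
  have hmin := add_inner_le_of_neg_gradient (hΦ n)
    (convexOn_regularize hg)
    ((contDiff_regularize hgu.continuous).differentiable (by simp)) x ξ
  refine (hnear _ _ (fun y hy ↦ hconj.le_add_inner y hy _) ?_).trans_lt (half_lt_self hε)
  linarith [hlow ((Φ n).symm x)]

theorem tendsto_setIntegral_comp_symm_neg_gradient_regularize {F : E → ℝ} {C : ℝ}
    (hg : ConvexOn ℝ univ g) (hgu : UniformContinuous g) (hconj : IsConcaveConjugateOn Ω g u)
    (hu : ConcaveOn ℝ Ω u) (hΩ : IsOpen Ω) (hΩ_fin : volume Ω ≠ ⊤) (hF : Continuous F)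
    (hFC : ∀ ξ, |F ξ| ≤ C) {Φ : ℕ → E ≃ₜ E} (hΦ : ∀ n ξ, Φ n ξ = -∇ (regularize n g) ξ) :
    Tendsto (fun n ↦ ∫ x in Ω, F ((Φ n).symm x)) atTop (𝓝 (∫ x in Ω, F (∇ u x))) := by
  refine tendsto_integral_of_dominated_convergence (fun _ ↦ C)
    (fun n ↦ (hF.comp (Φ n).symm.continuous).aestronglyMeasurable) (integrableOn_const hΩ_fin)
    (fun n ↦ ae_of_all _ fun x ↦ hFC _) ?_
  filter_upwards [ae_differentiableAt_of_concaveOn hu hΩ, ae_restrict_mem hΩ.measurableSet]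
    with x hdiff hx
  exact (hF.tendsto _).comp
    (tendsto_symm_neg_gradient_regularize hg hgu hconj (hΩ.mem_nhds hx) hdiff hΦ)

end Regularize

end ConcaveConjugate

section DualInequality

variable {F : Plane → ℝ} {K : ℝ}

theorem integral_mul_mixedHessDet_le_add {P χ θ : Plane → ℝ} {c : Plane} {s b D : ℝ}
    (hF : ContDiff ℝ ∞ F) (hP : ContDiff ℝ ∞ P) (hχ : ContDiff ℝ ∞ χ) (hθ : Continuous θ)
    (hχ0 : ∀ ξ ∉ closedBall c s, χ ξ = 0) (hθ0 : ∀ ξ ∉ closedBall c s, θ ξ = 0)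
    (hb : ∀ ξ, |θ ξ - χ ξ| ≤ b) (hD : ∫ ξ in closedBall c s, |mixedHessDet F P ξ| ≤ D) :
    ∫ ξ, θ ξ * mixedHessDet F P ξ ≤ (∫ ξ, P ξ * mixedHessDet F χ ξ) + b * D := by
  have hH : Continuous (mixedHessDet F P) := continuous_mixedHessDet hF hP
  have hcpt := isCompact_closedBall c s
  have hχ_supp : HasCompactSupport χ := .intro hcpt hχ0
  have hθ_supp : HasCompactSupport θ := .intro hcpt hθ0
  have hint {f : Plane → ℝ} (hf : Continuous f) (hf' : HasCompactSupport f) :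
      Integrable fun ξ ↦ f ξ * mixedHessDet F P ξ :=
    (hf.mul hH).integrable_of_hasCompactSupport hf'.mul_right
  have hsymm : ∫ ξ, χ ξ * mixedHessDet F P ξ = ∫ ξ, P ξ * mixedHessDet F χ ξ := by
    simp_rw [mixedHessDet_comm F]
    exact (integral_mul_mixedHessDet_comm hχ hP hF hχ_supp).symm
  have herror : ∫ ξ, (θ ξ - χ ξ) * mixedHessDet F P ξ ≤ b * D := calc
    _ = ∫ ξ in closedBall c s, (θ ξ - χ ξ) * mixedHessDet F P ξ :=
      (setIntegral_eq_integral_of_forall_compl_eq_zero fun ξ hξ ↦ by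
        rw [hθ0 ξ hξ, hχ0 ξ hξ, sub_zero, zero_mul]).symm
    _ ≤ ∫ ξ in closedBall c s, b * |mixedHessDet F P ξ| := by
      refine integral_mono (((hθ.sub hχ.continuous).mul hH).continuousOn.integrableOn_compact hcpt)
        ((hH.abs.const_mul b).continuousOn.integrableOn_compact hcpt) fun ξ ↦ ?_
      refine (le_abs_self _).trans ?_
      rw [abs_mul]
      exact mul_le_mul_of_nonneg_right (hb ξ) (abs_nonneg _)
    _ = b * ∫ ξ in closedBall c s, |mixedHessDet F P ξ| := integral_const_mul _ _
    _ ≤ b * D := mul_le_mul_of_nonneg_left hD ((abs_nonneg _).trans (hb 0))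
  have hsplit : ∫ ξ, (θ ξ - χ ξ) * mixedHessDet F P ξ
      = (∫ ξ, θ ξ * mixedHessDet F P ξ) - ∫ ξ, χ ξ * mixedHessDet F P ξ := by
    simp_rw [sub_mul]
    exact integral_sub (hint hθ hθ_supp) (hint hχ.continuous hχ_supp)
  linarith

theorem setIntegral_comp_symm_neg_gradient_sub_le {p₁ p₂ χ : Plane → ℝ} {c : Plane} {s b D : ℝ}
    {Ω : Set Plane} {Φ₁ Φ₂ : Plane ≃ₜ Plane} (hΦ₁ : ∀ ξ, Φ₁ ξ = -∇ p₁ ξ)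
    (hΦ₂ : ∀ ξ, Φ₂ ξ = -∇ p₂ ξ) (hp₁ : ContDiff ℝ ∞ p₁) (hp₂ : ContDiff ℝ ∞ p₂)
    (hconv₁ : ConvexOn ℝ univ p₁) (hconv₂ : ConvexOn ℝ univ p₂) (hF : ContDiff ℝ ∞ F)
    (hFK : ∀ ξ, |F ξ| ≤ K) (hΩ : MeasurableSet Ω) (hΩ_fin : volume Ω ≠ ⊤)
    (heq : ∀ ξ ∉ closedBall c s, p₁ ξ = p₂ ξ) (hsub : Φ₂ '' closedBall c s ⊆ Ω)
    (hχ : ContDiff ℝ ∞ χ) (hχ0 : ∀ ξ ∉ closedBall c s, χ ξ = 0)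
    (hb : ∀ ξ, |p₁ ξ - p₂ ξ - χ ξ| ≤ b)
    (hD : ∫ ξ in closedBall c s, |mixedHessDet F (fun η ↦ p₁ η + p₂ η) ξ| ≤ D) :
    (∫ x in Ω, F (Φ₁.symm x)) - ∫ x in Ω, F (Φ₂.symm x)
      ≤ 1 / 2 * ((∫ ξ, (p₁ ξ + p₂ ξ) * mixedHessDet F χ ξ) + b * D) := by
  have hint (Φ : Plane ≃ₜ Plane) : IntegrableOn (fun x ↦ F (Φ.symm x)) Ω :=
    Measure.integrableOn_of_bounded hΩ_fin
      (hF.continuous.comp Φ.symm.continuous).aestronglyMeasurable (ae_of_all _ fun x ↦ hFK _)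
  rw [← integral_sub (hint Φ₁) (hint Φ₂), setIntegral_comp_symm_neg_gradient_sub hΦ₁ hΦ₂ hp₁ hp₂
    hconv₁ hconv₂ hF hΩ heq hsub]
  gcongr
  exact integral_mul_mixedHessDet_le_add hF (hp₁.add hp₂) hχ (hp₁.sub hp₂).continuous hχ0
    (fun ξ hξ ↦ sub_eq_zero.2 (heq ξ hξ)) hb hD

theorem tendsto_integral_mul_of_tendstoUniformlyOn {α : Type*} [TopologicalSpace α] [R1Space α]
    [MeasurableSpace α] [OpensMeasurableSpace α] {μ : Measure α} [IsFiniteMeasureOnCompacts μ]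
    {p : ℕ → α → ℝ} {q f : α → ℝ} {S : Set α} (hS : IsCompact S) (hp : ∀ n, Continuous (p n))
    (hpq : TendstoUniformlyOn p q atTop S) (hf : Continuous f) (hf0 : ∀ x ∉ S, f x = 0) :
    Tendsto (fun n ↦ ∫ x, p n x * f x ∂μ) atTop (𝓝 (∫ x, q x * f x ∂μ)) := by
  obtain ⟨B, hB⟩ := hS.exists_bound_of_continuousOn
    (hpq.continuousOn (.of_forall fun n ↦ (hp n).continuousOn))
  have hf_supp : HasCompactSupport f := .intro hS hf0
  refine tendsto_integral_filter_of_dominated_convergence (fun x ↦ (B + 1) * |f x|)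
    (.of_forall fun n ↦ ((hp n).mul hf).aestronglyMeasurable)
    ?_ ((hf.integrable_of_hasCompactSupport hf_supp).abs.const_mul (B + 1))
    (ae_of_all _ fun x ↦ ?_)
  · filter_upwards [Metric.tendstoUniformlyOn_iff.1 hpq 1 one_pos] with n hn
    refine ae_of_all _ fun x ↦ ?_
    by_cases hx : x ∈ S
    · rw [norm_mul, Real.norm_eq_abs (f x)]
      gcongr
      have hclose := hn x hx
      rw [dist_comm, dist_eq_norm] at hclose
      linarith [norm_le_norm_add_norm_sub' (p n x) (q x), hB x hx]
    · simp [hf0 x hx]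
  · by_cases hx : x ∈ S
    · exact (hpq.tendsto_at hx).mul_const (f x)
    · simp [hf0 x hx]

theorem eventually_setIntegral_comp_symm_neg_gradient_regularize_sub_le {g G χ : Plane → ℝ}
    {c : Plane} {r s R ρ b B C η : ℝ} {Φ Ψ : ℕ → Plane ≃ₜ Plane}
    (hF : ContDiff ℝ ∞ F) (hFK : ∀ ξ, |F ξ| ≤ K) (hg : ConvexOn ℝ univ g)
    (hgu : UniformContinuous g) (hG : ConvexOn ℝ univ G) (hGu : UniformContinuous G)
    (hΦ : ∀ n ξ, Φ n ξ = -∇ (regularize n G) ξ) (hΨ : ∀ n ξ, Ψ n ξ = -∇ (regularize n g) ξ)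
    (hrs : r < s) (hsR : s < R) (hρ : 0 ≤ ρ) (hρ1 : ρ < 1)
    (hlip : ∀ ξ ∈ closedBall c R, ∀ η ∈ closedBall c R, |g ξ - g η| ≤ ρ * ‖ξ - η‖)
    (hC : ∀ P : Plane → ℝ, ∀ B, ContDiff ℝ ∞ P → ConvexOn ℝ univ P →
      (∀ ξ ∈ closedBall c (R + 2), |P ξ| ≤ B) →
      ∫ ξ in closedBall c s, |mixedHessDet F P ξ| ≤ C * B)
    (hχ : ContDiff ℝ ∞ χ) (hGg : ∀ ξ ∉ closedBall c r, G ξ = g ξ)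
    (hχ0 : ∀ ξ ∉ closedBall c r, χ ξ = 0) (hb : ∀ ξ, |G ξ - g ξ - χ ξ| ≤ b)
    (hB : ∀ ξ ∈ closedBall c (R + 2), |G ξ + g ξ| ≤ B) (hη : 0 < η) :
    ∀ᶠ n in atTop, (∫ x in Omega, F ((Φ n).symm x)) - ∫ x in Omega, F ((Ψ n).symm x)
      ≤ 1 / 2 * ((∫ ξ, (regularize n G ξ + regularize n g ξ) * mixedHessDet F χ ξ)
        + (b + η) * (C * (B + η))) := by
  have hθ0 : ∀ ξ ∉ closedBall c r, G ξ - g ξ = 0 := fun ξ hξ ↦ sub_eq_zero.2 (hGg ξ hξ)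
  have hP := (tendstoUniformlyOn_regularize hGu c (R + 2)).add
    (tendstoUniformlyOn_regularize hgu c (R + 2))
  filter_upwards [eventually_mollify_eq_zero (hGu.continuous.sub hgu.continuous) hrs hθ0,
    eventually_norm_gradient_regularize_lt_one hgu.continuous hρ hρ1 hsR hlip,
    Metric.tendstoUniformly_iff.1 (tendstoUniformly_mollify (hGu.sub hgu)) η hη,
    Metric.tendstoUniformlyOn_iff.1 hP η hη] with n hmoll0 hgrad hmoll hPn
  have hG' := contDiff_regularize (n := n) hGu.continuous
  have hg' := contDiff_regularize (n := n) hgu.continuous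
  refine setIntegral_comp_symm_neg_gradient_sub_le (hΦ n) (hΨ n) hG' hg' (convexOn_regularize hG)
    (convexOn_regularize hg) hF hFK measurableSet_ball measure_ball_lt_top.ne (fun ξ hξ ↦ ?_)
    (image_subset_iff.2 fun ξ hξ ↦ ?_) hχ
    (fun ξ hξ ↦ hχ0 ξ fun h ↦ hξ (closedBall_subset_closedBall hrs.le h)) (fun ξ ↦ ?_)
    (hC _ _ (hG'.add hg') ((convexOn_regularize hG).add (convexOn_regularize hg)) fun ξ hξ ↦ ?_)
  · rw [← sub_eq_zero, regularize_sub_regularize hGu.continuous hgu.continuous]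
    exact hmoll0 ξ hξ
  · rw [mem_preimage, Omega, mem_ball_zero_iff, hΨ, norm_neg]
    exact hgrad ξ hξ
  · rw [regularize_sub_regularize hGu.continuous hgu.continuous]
    have hclose := hmoll ξ
    rw [dist_comm, Real.dist_eq] at hclose
    exact (abs_sub_le _ (G ξ - g ξ) _).trans (by linarith [hb ξ])
  · have hclose := hPn ξ hξ
    simp only [Pi.add_apply] at hclose
    rw [dist_comm, Real.dist_eq] at hclose
    linarith [abs_sub_abs_le_abs_sub (regularize n G ξ + regularize n g ξ) (G ξ + g ξ), hB ξ hξ]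

theorem uniformContinuous_of_forall_notMem_eq {α : Type*} [UniformSpace α] [R1Space α]
    {f g : α → ℝ} {S : Set α} (hS : IsCompact S) (hf : UniformContinuous f) (hg : Continuous g)
    (h : ∀ x ∉ S, g x = f x) : UniformContinuous g := by
  have hsub : UniformContinuous fun x ↦ g x - f x :=
    HasCompactSupport.uniformContinuous_of_continuous
      (.intro hS fun x hx ↦ sub_eq_zero.2 (h x hx)) (hg.sub hf.continuous)
  simpa using hsub.add hf

theorem exists_setIntegral_gradient_sub_le {g u : Plane → ℝ} {c : Plane} {r R ρ : ℝ}
    (hF : ContDiff ℝ ∞ F) (hFK : ∀ ξ, |F ξ| ≤ K) (hg : ConvexOn ℝ univ g)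
    (hgu : UniformContinuous g) (hu : ConcaveOn ℝ Omega u) (hconj : IsConcaveConjugateOn Omega g u)
    (hr : 0 ≤ r) (hrR : r < R) (hρ : 0 ≤ ρ) (hρ1 : ρ < 1)
    (hlip : ∀ ξ ∈ closedBall c R, ∀ η ∈ closedBall c R, |g ξ - g η| ≤ ρ * ‖ξ - η‖) :
    ∃ C, ∀ (G v χ : Plane → ℝ) (b B : ℝ), ConvexOn ℝ univ G → ConcaveOn ℝ Omega v →
      IsConcaveConjugateOn Omega G v → ContDiff ℝ ∞ χ → (∀ ξ ∉ closedBall c r, G ξ = g ξ) →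
      (∀ ξ ∉ closedBall c r, χ ξ = 0) → (∀ ξ, |G ξ - g ξ - χ ξ| ≤ b) →
      (∀ ξ ∈ closedBall c (R + 2), |G ξ + g ξ| ≤ B) →
      (∫ x in Omega, F (∇ v x)) - ∫ x in Omega, F (∇ u x)
        ≤ 1 / 2 * ((∫ ξ, (G ξ + g ξ) * mixedHessDet F χ ξ) + b * (C * B)) := by
  obtain ⟨s, hrs, hsR⟩ := exists_between hrR
  obtain ⟨C, hC⟩ := exists_setIntegral_abs_mixedHessDet_le hF c s
  refine ⟨C, fun G v χ b B hG hv hGv hχ hGg hχ0 hb hB ↦ ?_⟩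
  have hGu : UniformContinuous G := uniformContinuous_of_forall_notMem_eq
    (isCompact_closedBall c r) hgu (continuousOn_univ.1 (hG.continuousOn isOpen_univ)) hGg
  have hhomeo {f : Plane → ℝ} (hf : ConvexOn ℝ univ f) (hf' : Continuous f) (n : ℕ) :=
    exists_homeomorph_eq_neg_gradient (strongConvexOn_regularize (n := n) hf) (by positivity)
      ((contDiff_regularize hf').of_le (by norm_cast))
  choose Φ hΦ using hhomeo hG hGu.continuous
  choose Ψ hΨ using hhomeo hg hgu.continuous
  have hΩ_fin : volume Omega ≠ ⊤ := measure_ball_lt_top.ne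
  have hlim := (tendsto_setIntegral_comp_symm_neg_gradient_regularize hG hGu hGv hv isOpen_ball
    hΩ_fin hF.continuous hFK hΦ).sub (tendsto_setIntegral_comp_symm_neg_gradient_regularize
      hg hgu hconj hu isOpen_ball hΩ_fin hF.continuous hFK hΨ)
  have hlimP := tendsto_integral_mul_of_tendstoUniformlyOn (μ := volume)
    (isCompact_closedBall c (R + 2)) (fun n ↦ ((contDiff_regularize hGu.continuous).add
      (contDiff_regularize hgu.continuous)).continuous)
    ((tendstoUniformlyOn_regularize hGu c (R + 2)).add
      (tendstoUniformlyOn_regularize hgu c (R + 2))) (continuous_mixedHessDet hF hχ)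
    fun ξ ↦ mixedHessDet_eq_zero_of_notMem isClosed_closedBall fun η hη ↦
      hχ0 η fun h ↦ hη (closedBall_subset_closedBall (by linarith) h)
  have hη : ∀ η > 0, (∫ x in Omega, F (∇ v x)) - ∫ x in Omega, F (∇ u x)
      ≤ 1 / 2 * ((∫ ξ, (G ξ + g ξ) * mixedHessDet F χ ξ) + (b + η) * (C * (B + η))) := fun η hη ↦
    le_of_tendsto_of_tendsto hlim ((hlimP.add_const _).const_mul _)
      (eventually_setIntegral_comp_symm_neg_gradient_regularize_sub_le hF hFK hg hgu hG hGu hΦ hΨ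
        hrs hsR hρ hρ1 hlip (fun P B hP hPc hPB ↦ hC P B hP hPc fun ξ hξ ↦
          hPB ξ (closedBall_subset_closedBall (by rw [abs_of_nonneg] <;> linarith) hξ))
        hχ hGg hχ0 hb hB hη)
  have hcont : Continuous fun η : ℝ ↦ 1 / 2 * ((∫ ξ, (G ξ + g ξ) * mixedHessDet F χ ξ)
      + (b + η) * (C * (B + η))) := by fun_prop
  have hlim0 := (hcont.tendsto 0).mono_left (nhdsWithin_le_nhds (s := Ioi 0))
  simp only [add_zero] at hlim0
  exact ge_of_tendsto hlim0 (eventually_mem_nhdsWithin.mono hη)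

end DualInequality

section Subgradient

variable {E : Type*} [NormedAddCommGroup E] [InnerProductSpace ℝ E] {f g χ : E → ℝ} {c : E}
  {r R : ℝ}

/-- `q` is a subgradient of `g` at `ξ₀`. -/
def IsSubgradientAt (g : E → ℝ) (q ξ₀ : E) : Prop :=
  ∀ ξ, g ξ₀ + ⟪q, ξ - ξ₀⟫_ℝ ≤ g ξ

theorem convexOn_of_forall_exists_isSubgradientAt (hg : ∀ ξ, ∃ q, IsSubgradientAt g q ξ) :
    ConvexOn ℝ univ g := by
  refine ⟨convex_univ, fun ξ _ η _ a b ha hb hab ↦ ?_⟩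
  obtain ⟨q, hq⟩ := hg (a • ξ + b • η)
  have hξ := mul_le_mul_of_nonneg_left (hq ξ) ha
  have hη := mul_le_mul_of_nonneg_left (hq η) hb
  obtain rfl : b = 1 - a := by linarith
  simp only [inner_sub_right, inner_add_right, inner_smul_right, smul_eq_mul] at hξ hη ⊢
  linarith

theorem lipschitzOnWith_of_forall_exists_isSubgradientAt {ρ : NNReal} {S : Set E}
    (h : ∀ ξ ∈ S, ∃ q, ‖q‖ ≤ ρ ∧ IsSubgradientAt g q ξ) : LipschitzOnWith ρ g S := by
  refine .of_le_add_mul ρ fun ξ hξ η _ ↦ ?_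
  obtain ⟨q, hqρ, hq⟩ := h ξ hξ
  have hinner : ⟪q, ξ - η⟫_ℝ ≤ ρ * dist ξ η :=
    (real_inner_le_norm _ _).trans (by rw [dist_eq_norm]; gcongr)
  have hle := hq η
  rw [inner_sub_right] at hinner hle
  linarith

/-- The second difference of `g` over the segment from `ξ` to `ξ + w`. -/
noncomputable def midpointGap (g : E → ℝ) (ξ w : E) : ℝ :=
  g ξ + g (ξ + w) - 2 * g (ξ + (1 / 2 : ℝ) • w)

theorem midpointGap_pos_of_forall_lt {ξ w q : E} (hw : w ≠ 0)
    (h : ∀ η ≠ ξ + (1 / 2 : ℝ) • w,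
      g (ξ + (1 / 2 : ℝ) • w) + ⟪q, η - (ξ + (1 / 2 : ℝ) • w)⟫_ℝ < g η) :
    0 < midpointGap g ξ w := by
  have hleft := h ξ (by simpa using hw)
  have hright := h (ξ + w) fun heq ↦ hw (by
    have hhalf := congrArg (fun z ↦ (2 : ℝ) • z) (add_left_cancel heq)
    simpa [two_smul] using hhalf)
  simp only [inner_sub_right, inner_add_right, inner_smul_right] at hleft hright
  rw [midpointGap]
  linarith

theorem midpointGap_smul_sub_le (hg : ConvexOn ℝ univ g) {ξ₀ q : E} (hq : IsSubgradientAt g q ξ₀)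
    (ξ : E) {t : ℝ} (ht0 : 0 ≤ t) (ht1 : t ≤ 1) :
    midpointGap g ξ₀ (t • (ξ - ξ₀)) ≤ g ξ - g ξ₀ - ⟪q, ξ - ξ₀⟫_ℝ := by
  have hend := hg.2 (mem_univ ξ₀) (mem_univ ξ) (sub_nonneg.2 ht1) ht0 (by ring)
  rw [show (1 - t) • ξ₀ + t • ξ = ξ₀ + t • (ξ - ξ₀) by module, smul_eq_mul, smul_eq_mul] at hend
  have hmid := hq (ξ₀ + (1 / 2 : ℝ) • t • (ξ - ξ₀))
  rw [add_sub_cancel_left, inner_smul_right, inner_smul_right] at hmid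
  rw [midpointGap]
  nlinarith [hq ξ]

theorem midpointGap_smul_sub_le_two_mul (hg : ConvexOn ℝ univ g) {ξ₀ q : E}
    (hq : IsSubgradientAt g q ξ₀) (ξ : E) {t : ℝ} (ht0 : 0 ≤ t) (ht1 : t ≤ 1) :
    midpointGap g ξ (t • (ξ₀ - ξ)) ≤ 2 * (g ξ - g ξ₀ - ⟪q, ξ - ξ₀⟫_ℝ) := by
  have hend := hg.2 (mem_univ ξ) (mem_univ ξ₀) (sub_nonneg.2 ht1) ht0 (by ring)
  rw [show (1 - t) • ξ + t • ξ₀ = ξ + t • (ξ₀ - ξ) by module, smul_eq_mul, smul_eq_mul] at hend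
  have hmid := hq (ξ + (1 / 2 : ℝ) • t • (ξ₀ - ξ))
  rw [show ξ + (1 / 2 : ℝ) • t • (ξ₀ - ξ) - ξ₀ = (1 - t / 2) • (ξ - ξ₀) by module,
    inner_smul_right] at hmid
  rw [midpointGap]
  nlinarith [hq ξ]

theorem exists_forall_le_midpointGap [ProperSpace E] (hgc : Continuous g) (hrR : r < R)
    (hstrict : ∀ ξ ∈ closedBall c R, ∃ q, ∀ η ≠ ξ, g ξ + ⟪q, η - ξ⟫_ℝ < g η) {d : ℝ} (hd : 0 < d) :
    ∃ t ∈ Ioc 0 d, ∃ a > 0, ∀ ξ ∈ closedBall c r, ∀ w, ‖w‖ = t → a ≤ midpointGap g ξ w := by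
  set t := min d (R - r)
  have ht : 0 < t := lt_min hd (sub_pos.2 hrR)
  refine ⟨t, ⟨ht, min_le_left _ _⟩, ?_⟩
  have hcont : Continuous fun p : E × E ↦ midpointGap g p.1 p.2 := by
    unfold midpointGap
    fun_prop
  obtain ⟨a, ha, hmin⟩ := ((isCompact_closedBall c r).prod
    (isCompact_sphere (0 : E) t)).exists_forall_le' hcont.continuousOn (a := 0) (by
      rintro ⟨ξ, w⟩ ⟨hξ, hw⟩
      replace hξ : dist ξ c ≤ r := hξ
      replace hw : ‖w‖ = t := mem_sphere_zero_iff_norm.1 hw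
      have hmem : ξ + (1 / 2 : ℝ) • w ∈ closedBall c R := by
        have hhalf : ‖(1 / 2 : ℝ) • w‖ ≤ R - r := by
          rw [norm_smul, hw, Real.norm_of_nonneg (by norm_num)]
          linarith [min_le_right d (R - r)]
        have htri := dist_triangle (ξ + (1 / 2 : ℝ) • w) ξ c
        rw [dist_self_add_left] at htri
        exact htri.trans (by linarith)
      obtain ⟨q, hq⟩ := hstrict _ hmem
      exact midpointGap_pos_of_forall_lt (norm_pos_iff.1 (hw ▸ ht)) hq)
  exact ⟨a, ha, fun ξ hξ w hw ↦ hmin (ξ, w) ⟨hξ, mem_sphere_zero_iff_norm.2 hw⟩⟩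

theorem exists_forall_le_sub_sub_inner [ProperSpace E] (hg : ConvexOn ℝ univ g)
    (hgc : Continuous g) (hrR : r < R)
    (hstrict : ∀ ξ ∈ closedBall c R, ∃ q, ∀ η ≠ ξ, g ξ + ⟪q, η - ξ⟫_ℝ < g η) {d : ℝ} (hd : 0 < d) :
    ∃ a > 0, ∀ ξ₀ q ξ, IsSubgradientAt g q ξ₀ → d ≤ ‖ξ - ξ₀‖ →
      ξ₀ ∈ closedBall c r ∨ ξ ∈ closedBall c r → a ≤ g ξ - g ξ₀ - ⟪q, ξ - ξ₀⟫_ℝ := by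
  obtain ⟨t, ⟨ht, htd⟩, a, ha, hmin⟩ := exists_forall_le_midpointGap hgc hrR hstrict hd
  refine ⟨a / 2, half_pos ha, fun ξ₀ q ξ hq hdξ hmem ↦ ?_⟩
  have hpos : 0 < ‖ξ - ξ₀‖ := hd.trans_le hdξ
  have ht0 : 0 ≤ t / ‖ξ - ξ₀‖ := by positivity
  have ht1 : t / ‖ξ - ξ₀‖ ≤ 1 := (div_le_one hpos).2 (htd.trans hdξ)
  have hnorm : ‖(t / ‖ξ - ξ₀‖) • (ξ - ξ₀)‖ = t := by
    rw [norm_smul, Real.norm_of_nonneg ht0, div_mul_cancel₀ _ hpos.ne']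
  rcases hmem with hξ₀ | hξ
  · linarith [hmin ξ₀ hξ₀ _ hnorm, midpointGap_smul_sub_le hg hq ξ ht0 ht1]
  · rw [← norm_neg, ← smul_neg, neg_sub] at hnorm
    linarith [hmin ξ hξ _ hnorm, midpointGap_smul_sub_le_two_mul hg hq ξ ht0 ht1]

/-- The lower convex envelope: the supremum of the affine minorants. It has a junk value when there
are none. -/
noncomputable def affineEnvelope (f : E → ℝ) (ξ : E) : ℝ :=
  ⨆ p : {p : E × ℝ // ∀ η, p.2 + ⟪p.1, η⟫_ℝ ≤ f η}, (p.1.2 + ⟪p.1.1, ξ⟫_ℝ)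

theorem le_affineEnvelope {q : E} {a : ℝ} (h : ∀ η, a + ⟪q, η⟫_ℝ ≤ f η) (ξ : E) :
    a + ⟪q, ξ⟫_ℝ ≤ affineEnvelope f ξ :=
  le_ciSup (f := fun p : {p : E × ℝ // ∀ η, p.2 + ⟪p.1, η⟫_ℝ ≤ f η} ↦ p.1.2 + ⟪p.1.1, ξ⟫_ℝ)
    ⟨f ξ, by rintro _ ⟨p, rfl⟩; exact p.2 ξ⟩ ⟨(q, a), h⟩

theorem affineEnvelope_le {q : E} {a : ℝ} (h : ∀ η, a + ⟪q, η⟫_ℝ ≤ f η) (ξ : E) :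
    affineEnvelope f ξ ≤ f ξ :=
  have : Nonempty {p : E × ℝ // ∀ η, p.2 + ⟪p.1, η⟫_ℝ ≤ f η} := ⟨⟨(q, a), h⟩⟩
  ciSup_le fun p ↦ p.2 ξ

theorem convexOn_affineEnvelope {q : E} {a : ℝ} (h : ∀ η, a + ⟪q, η⟫_ℝ ≤ f η) :
    ConvexOn ℝ univ (affineEnvelope f) := by
  have : Nonempty {p : E × ℝ // ∀ η, p.2 + ⟪p.1, η⟫_ℝ ≤ f η} := ⟨⟨(q, a), h⟩⟩
  refine ⟨convex_univ, fun x _ y _ s t hs ht hst ↦ ciSup_le fun p ↦ ?_⟩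
  have hx := mul_le_mul_of_nonneg_left (le_affineEnvelope p.2 x) hs
  have hy := mul_le_mul_of_nonneg_left (le_affineEnvelope p.2 y) ht
  obtain rfl : t = 1 - s := by linarith
  simp only [inner_add_right, inner_smul_right, smul_eq_mul]
  linarith

theorem exists_convexOn_abs_sub_le_of_minorants {φ : E → ℝ} {S : Set E} {b : ℝ} (hb : 0 ≤ b)
    (hφ : ∀ ξ ∉ S, φ ξ = 0)
    (hin : ∀ ξ₀ ∈ S, ∃ q, ∀ ξ, g ξ₀ + φ ξ₀ - b - ⟪q, ξ₀⟫_ℝ + ⟪q, ξ⟫_ℝ ≤ g ξ + φ ξ)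
    (hout : ∀ ξ₀ ∉ S, ∃ q, ∀ ξ, g ξ₀ - ⟪q, ξ₀⟫_ℝ + ⟪q, ξ⟫_ℝ ≤ g ξ + φ ξ) :
    ∃ G, ConvexOn ℝ univ G ∧ (∀ ξ ∉ S, G ξ = g ξ) ∧ ∀ ξ, |G ξ - g ξ - φ ξ| ≤ b := by
  obtain ⟨q₀, a₀, hq₀⟩ : ∃ q a, ∀ ξ, a + ⟪q, ξ⟫_ℝ ≤ g ξ + φ ξ := by
    by_cases h0 : (0 : E) ∈ S
    · obtain ⟨q, hq⟩ := hin 0 h0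
      exact ⟨q, _, hq⟩
    · obtain ⟨q, hq⟩ := hout 0 h0
      exact ⟨q, _, hq⟩
  have hle := affineEnvelope_le (f := fun ξ ↦ g ξ + φ ξ) hq₀
  have heq : ∀ ξ ∉ S, affineEnvelope (fun ξ ↦ g ξ + φ ξ) ξ = g ξ := fun ξ hξ ↦ by
    obtain ⟨q, hq⟩ := hout ξ hξ
    linarith [hle ξ, hφ ξ hξ, le_affineEnvelope (f := fun ξ ↦ g ξ + φ ξ) hq ξ]
  refine ⟨affineEnvelope fun ξ ↦ g ξ + φ ξ, convexOn_affineEnvelope hq₀, heq, fun ξ ↦ ?_⟩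
  by_cases hξ : ξ ∈ S
  · obtain ⟨q, hq⟩ := hin ξ hξ
    rw [abs_le]
    constructor <;> linarith [hle ξ, le_affineEnvelope (f := fun ξ ↦ g ξ + φ ξ) hq ξ]
  · simpa [heq ξ hξ, hφ ξ hξ] using hb

theorem sub_inner_add_inner_le_of_le_gap {φ : E → ℝ} {A η a d : ℝ} {ξ₀ q : E} (hη : 0 ≤ η)
    (hA : ∀ ξ, |φ ξ| ≤ A) (hAa : 2 * A ≤ a) (hφ : ∀ ξ, ‖ξ - ξ₀‖ < d → |φ ξ - φ ξ₀| ≤ η)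
    (hq : IsSubgradientAt g q ξ₀)
    (hgap : ∀ ξ, d ≤ ‖ξ - ξ₀‖ → a ≤ g ξ - g ξ₀ - ⟪q, ξ - ξ₀⟫_ℝ) (ξ : E) :
    g ξ₀ + φ ξ₀ - η - ⟪q, ξ₀⟫_ℝ + ⟪q, ξ⟫_ℝ ≤ g ξ + φ ξ := by
  rcases le_or_gt d ‖ξ - ξ₀‖ with hfar | hnear
  · have hbound := hgap ξ hfar
    rw [inner_sub_right] at hbound
    linarith [(abs_le.1 (hA ξ)).1, (abs_le.1 (hA ξ₀)).2]
  · have hbound := hq ξ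
    rw [inner_sub_right] at hbound
    linarith [(abs_le.1 (hφ ξ hnear)).1]

theorem sub_inner_add_inner_le_of_notMem {φ : E → ℝ} {A a r₀ : ℝ} {ξ₀ q : E}
    (hA : ∀ ξ, |φ ξ| ≤ A) (hAa : 2 * A ≤ a) (hφ : ∀ ξ ∉ closedBall c r₀, φ ξ = 0)
    (hξ₀ : ξ₀ ∉ closedBall c r) (hq : IsSubgradientAt g q ξ₀)
    (hgap : ∀ ξ ∈ closedBall c r₀, r - r₀ ≤ ‖ξ - ξ₀‖ → a ≤ g ξ - g ξ₀ - ⟪q, ξ - ξ₀⟫_ℝ) (ξ : E) :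
    g ξ₀ - ⟪q, ξ₀⟫_ℝ + ⟪q, ξ⟫_ℝ ≤ g ξ + φ ξ := by
  by_cases hξ : ξ ∈ closedBall c r₀
  · have hdist := dist_triangle ξ₀ ξ c
    rw [dist_comm ξ₀ ξ, dist_eq_norm ξ ξ₀] at hdist
    rw [mem_closedBall, not_le] at hξ₀
    have hbound := hgap ξ hξ (by linarith [mem_closedBall.1 hξ])
    rw [inner_sub_right] at hbound
    linarith [(abs_le.1 (hA ξ)).1, (abs_nonneg _).trans (hA ξ)]
  · have hbound := hq ξ
    rw [inner_sub_right] at hbound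
    linarith [hφ ξ hξ]

theorem eventually_exists_convexOn_abs_sub_le [ProperSpace E] (hgc : Continuous g)
    (hsub : ∀ ξ, ∃ q, IsSubgradientAt g q ξ)
    (hstrict : ∀ ξ ∈ closedBall c R, ∃ q, ∀ η ≠ ξ, g ξ + ⟪q, η - ξ⟫_ℝ < g η) {r₀ : ℝ}
    (hr : r₀ < r) (hrR : r < R) (hχ : Continuous χ) (hχ0 : ∀ ξ ∉ closedBall c r₀, χ ξ = 0)
    {η : ℝ} (hη : 0 < η) :
    ∀ᶠ s in 𝓝[>] (0 : ℝ), ∃ G, ConvexOn ℝ univ G ∧ (∀ ξ ∉ closedBall c r, G ξ = g ξ) ∧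
      ∀ ξ, |G ξ - g ξ - s * χ ξ| ≤ s * η := by
  have hχs : HasCompactSupport χ := .intro (isCompact_closedBall c r₀) hχ0
  obtain ⟨A, hA⟩ := hχs.exists_bound_of_continuous hχ
  obtain ⟨d, hd, hunif⟩ :=
    Metric.uniformContinuous_iff.1 (hχs.uniformContinuous_of_continuous hχ) η hη
  simp only [dist_eq_norm] at hunif
  obtain ⟨a, ha, hgap⟩ := exists_forall_le_sub_sub_inner
    (convexOn_of_forall_exists_isSubgradientAt hsub) hgc hrR hstrict (lt_min hd (sub_pos.2 hr))
  have hlim : Tendsto (fun s ↦ 2 * (s * A)) (𝓝[>] (0 : ℝ)) (𝓝 0) :=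
    ((by fun_prop : Continuous fun s ↦ 2 * (s * A)).tendsto' 0 0 (by simp)).mono_left
      nhdsWithin_le_nhds
  filter_upwards [hlim.eventually_lt_const ha, self_mem_nhdsWithin] with s hsa (hs : 0 < s)
  have hsA (ξ : E) : |s * χ ξ| ≤ s * A := by
    rw [abs_mul, abs_of_pos hs]
    exact mul_le_mul_of_nonneg_left (hA ξ) hs.le
  have hsub_ball := closedBall_subset_closedBall (x := c) hr.le
  refine exists_convexOn_abs_sub_le_of_minorants (by positivity)
    (fun ξ hξ ↦ by rw [hχ0 ξ fun h ↦ hξ (hsub_ball h), mul_zero]) (fun ξ₀ hξ₀ ↦ ?_) fun ξ₀ hξ₀ ↦ ?_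
  · obtain ⟨q, hq⟩ := hsub ξ₀
    refine ⟨q, sub_inner_add_inner_le_of_le_gap (by positivity) hsA hsa.le (fun ξ hξ ↦ ?_) hq
      fun ξ hξ ↦ hgap ξ₀ q ξ hq hξ (.inl hξ₀)⟩
    rw [← mul_sub, abs_mul, abs_of_pos hs]
    exact mul_le_mul_of_nonneg_left (hunif (hξ.trans_le (min_le_left _ _))).le hs.le
  · obtain ⟨q, hq⟩ := hsub ξ₀
    exact ⟨q, sub_inner_add_inner_le_of_notMem hsA hsa.le
      (fun ξ hξ ↦ by rw [hχ0 ξ hξ, mul_zero]) hξ₀ hq fun ξ hξ hdist ↦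
        hgap ξ₀ q ξ hq ((min_le_right _ _).trans hdist) (.inr (hsub_ball hξ))⟩

end Subgradient

section Variation

open scoped NNReal

/-- The density `ξ ↦ 1 / (‖ξ‖² + 1)` of Newton's resistance functional as a function of the
gradient. -/
noncomputable def newtonDensity (ξ : Plane) : ℝ :=
  1 / (‖ξ‖ ^ 2 + 1)

theorem contDiff_newtonDensity : ContDiff ℝ ∞ newtonDensity :=
  contDiff_const.div ((contDiff_norm_sq ℝ).add contDiff_const) fun ξ ↦ by positivity

theorem abs_newtonDensity_le_one (ξ : Plane) : |newtonDensity ξ| ≤ 1 := by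
  rw [newtonDensity, abs_of_nonneg (by positivity), div_le_one (by positivity)]
  linarith [sq_nonneg ‖ξ‖]

/-- `u` minimizes Newton's resistance functional among the concave functions `Ω → [0, M]`. -/
structure IsNewtonMinimizer (M : ℝ) (u : Plane → ℝ) : Prop where
  concaveOn : ConcaveOn ℝ Omega u
  mem_Icc : ∀ x ∈ Omega, u x ∈ Icc 0 M
  J_le : ∀ v, ConcaveOn ℝ Omega v → (∀ x ∈ Omega, v x ∈ Icc 0 M) → J u ≤ J v

/-- The closed ball of centre `c` and radius `R` consists of slopes at which the function `g`, dual
to a profile `u : Ω → [0, M]`, may be perturbed in both directions: small convex perturbations of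
`g` supported in this ball are again dual to profiles `Ω → [0, M]`. -/
structure IsPerturbableBall (M : ℝ) (g u : Plane → ℝ) (c : Plane) (R : ℝ) : Prop where
  isConcaveConjugateOn : IsConcaveConjugateOn Omega g u
  lipschitzWith : LipschitzWith 1 g
  exists_isSubgradientAt : ∀ ξ, ∃ q, IsSubgradientAt g q ξ
  apply_zero_le : g 0 ≤ M
  zero_notMem : (0 : Plane) ∉ closedBall c R
  exists_lipschitzOnWith : ∃ ρ < 1, LipschitzOnWith ρ g (closedBall c R)
  exists_pos_le : ∃ m > 0, ∀ ξ ∈ closedBall c R, ∀ x ∈ Omega, m ≤ g ξ + ⟪ξ, x⟫_ℝ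
  exists_forall_lt : ∀ ξ ∈ closedBall c R, ∃ q, ∀ η ≠ ξ, g ξ + ⟪q, η - ξ⟫_ℝ < g η

theorem concaveOn_iInf_add_inner {E : Type*} [NormedAddCommGroup E] [InnerProductSpace ℝ E]
    {Ω : Set E} {G : E → ℝ} (hΩ : Convex ℝ Ω) (hG : ∀ x ∈ Ω, ∀ ξ, 0 ≤ G ξ + ⟪ξ, x⟫_ℝ) :
    ConcaveOn ℝ Ω fun x ↦ ⨅ ξ, (G ξ + ⟪ξ, x⟫_ℝ) := by
  have hle (x : E) (hx : x ∈ Ω) (ξ : E) : ⨅ ζ, (G ζ + ⟪ζ, x⟫_ℝ) ≤ G ξ + ⟪ξ, x⟫_ℝ :=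
    ciInf_le ⟨0, forall_mem_range.2 (hG x hx)⟩ ξ
  refine ⟨hΩ, fun x hx y hy a b ha hb hab ↦ le_ciInf fun ξ ↦ ?_⟩
  have hx' := mul_le_mul_of_nonneg_left (hle x hx ξ) ha
  have hy' := mul_le_mul_of_nonneg_left (hle y hy ξ) hb
  obtain rfl : b = 1 - a := by linarith
  rw [inner_add_right, inner_smul_right, inner_smul_right, smul_eq_mul, smul_eq_mul]
  linarith

theorem integral_add_mul_le {E : Type*} [TopologicalSpace E] [MeasurableSpace E]
    [OpensMeasurableSpace E] {μ : Measure E} [IsFiniteMeasureOnCompacts μ] {G g N : E → ℝ} {η : ℝ}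
    (hG : Continuous G) (hg : Continuous g) (hN : Continuous N) (hNs : HasCompactSupport N)
    (hη : ∀ ξ, |G ξ - g ξ| ≤ η) :
    ∫ ξ, (G ξ + g ξ) * N ξ ∂μ ≤ 2 * (∫ ξ, g ξ * N ξ ∂μ) + η * ∫ ξ, |N ξ| ∂μ := by
  have hgN : Integrable (fun ξ ↦ g ξ * N ξ) μ :=
    (hg.mul hN).integrable_of_hasCompactSupport hNs.mul_left
  have hN' : Integrable (fun ξ ↦ |N ξ|) μ := (hN.integrable_of_hasCompactSupport hNs).abs
  rw [← integral_const_mul, ← integral_const_mul,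
    ← integral_add (hgN.const_mul 2) (hN'.const_mul η)]
  refine integral_mono (((hG.add hg).mul hN).integrable_of_hasCompactSupport hNs.mul_left)
    ((hgN.const_mul 2).add (hN'.const_mul η)) fun ξ ↦ ?_
  have hmul : (G ξ - g ξ) * N ξ ≤ η * |N ξ| :=
    (le_abs_self _).trans (abs_mul (G ξ - g ξ) (N ξ) ▸ by gcongr; exact hη ξ)
  beta_reduce
  linarith

namespace IsPerturbableBall

variable {M : ℝ} {g u : Plane → ℝ} {c : Plane} {r R : ℝ}

theorem convexOn (h : IsPerturbableBall M g u c R) : ConvexOn ℝ univ g :=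
  convexOn_of_forall_exists_isSubgradientAt h.exists_isSubgradientAt

theorem exists_competitor (h : IsPerturbableBall M g u c R) (hmin : IsNewtonMinimizer M u) :
    ∃ m > 0, ∀ G : Plane → ℝ, (∀ ξ, |G ξ - g ξ| ≤ m) → (∀ ξ ∉ closedBall c R, G ξ = g ξ) →
      ∃ v, ConcaveOn ℝ Omega v ∧ IsConcaveConjugateOn Omega G v ∧ J u ≤ J v := by
  obtain ⟨m, hm, hlow⟩ := h.exists_pos_le
  refine ⟨m, hm, fun G hGm hGg ↦ ?_⟩
  have hnonneg (x : Plane) (hx : x ∈ Omega) (ξ : Plane) : 0 ≤ G ξ + ⟪ξ, x⟫_ℝ := by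
    by_cases hξ : ξ ∈ closedBall c R
    · linarith [hlow ξ hξ x hx, (abs_le.1 (hGm ξ)).1]
    · rw [hGg ξ hξ]
      exact (hmin.mem_Icc x hx).1.trans (h.isConcaveConjugateOn.le_add_inner x hx ξ)
  have hle (x : Plane) (hx : x ∈ Omega) (ξ : Plane) :
      ⨅ ζ, (G ζ + ⟪ζ, x⟫_ℝ) ≤ G ξ + ⟪ξ, x⟫_ℝ :=
    ciInf_le ⟨0, forall_mem_range.2 (hnonneg x hx)⟩ ξ
  have hconc := concaveOn_iInf_add_inner (convex_ball _ _) hnonneg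
  refine ⟨_, hconc, ⟨hle, fun x _ _ ε hε ↦ exists_lt_of_ciInf_lt (lt_add_of_pos_right _ hε)⟩,
    hmin.J_le _ hconc fun x hx ↦ ⟨le_ciInf (hnonneg x hx), (hle x hx 0).trans ?_⟩⟩
  rw [hGg 0 h.zero_notMem, inner_zero_left, add_zero]
  exact h.apply_zero_le

theorem exists_le_mul_add_integral (h : IsPerturbableBall M g u c R)
    (hmin : IsNewtonMinimizer M u) (hr : 0 ≤ r) (hrR : r < R) :
    ∃ C m, 0 < m ∧ ∀ (G χ : Plane → ℝ) (b : ℝ), ConvexOn ℝ univ G → (∀ ξ, |G ξ - g ξ| ≤ m) →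
      (∀ ξ ∉ closedBall c r, G ξ = g ξ) → ContDiff ℝ ∞ χ → (∀ ξ ∉ closedBall c r, χ ξ = 0) →
      (∀ ξ, |G ξ - g ξ - χ ξ| ≤ b) →
      0 ≤ b * C + ∫ ξ, (G ξ + g ξ) * mixedHessDet newtonDensity χ ξ := by
  obtain ⟨m, hm, hcomp⟩ := h.exists_competitor hmin
  obtain ⟨ρ, hρ, hlip⟩ := h.exists_lipschitzOnWith
  obtain ⟨C, hC⟩ := exists_setIntegral_gradient_sub_le contDiff_newtonDensity
    abs_newtonDensity_le_one h.convexOn h.lipschitzWith.uniformContinuous hmin.concaveOn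
    h.isConcaveConjugateOn hr hrR ρ.2 (by exact_mod_cast hρ)
    (by simpa only [dist_eq_norm, Real.norm_eq_abs] using! fun ξ hξ η hη ↦
      hlip.dist_le_mul ξ hξ η hη)
  obtain ⟨B, hB⟩ := (isCompact_closedBall c (R + 2)).exists_bound_of_continuousOn
    h.lipschitzWith.continuous.continuousOn
  refine ⟨C * (m + 2 * B), m, hm, fun G χ b hG hGm hGg hχ hχ0 hb ↦ ?_⟩
  obtain ⟨v, hv, hGv, hJ⟩ := hcomp G hGm fun ξ hξ ↦
    hGg ξ fun h' ↦ hξ (closedBall_subset_closedBall hrR.le h')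
  have hvar := hC G v χ b (m + 2 * B) hG hv hGv hχ hGg hχ0 hb fun ξ hξ ↦ by
    have hgB := hB ξ hξ
    have hGm' := abs_le.1 (hGm ξ)
    rw [Real.norm_eq_abs, abs_le] at hgB
    rw [abs_le]
    constructor <;> linarith
  change J v - J u ≤ _ at hvar
  linarith

theorem integral_nonneg (h : IsPerturbableBall M g u c R) (hmin : IsNewtonMinimizer M u)
    (hr : 0 ≤ r) (hrR : r < R) {χ : Plane → ℝ} (hχ : ContDiff ℝ ∞ χ)
    (hχ0 : ∀ ξ ∉ closedBall c r, χ ξ = 0) :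
    0 ≤ ∫ ξ, g ξ * mixedHessDet newtonDensity χ ξ := by
  obtain ⟨s₁, hrs, hsR⟩ := exists_between hrR
  obtain ⟨C, m, hm, hC⟩ := h.exists_le_mul_add_integral hmin (hr.trans hrs.le) hsR
  have hsub := closedBall_subset_closedBall (x := c) hrs.le
  have hχs : HasCompactSupport χ := .intro (isCompact_closedBall c r) hχ0
  obtain ⟨A, hA⟩ := hχs.exists_bound_of_continuous hχ.continuous
  set N := mixedHessDet newtonDensity χ
  have hN : Continuous N := continuous_mixedHessDet contDiff_newtonDensity hχ
  have hNs : HasCompactSupport N := hasCompactSupport_mixedHessDet hχs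
  have key : ∀ η > 0, 0 ≤ 2 * (∫ ξ, g ξ * N ξ) + η * (C + ∫ ξ, |N ξ|) := fun η hη ↦ by
    have hlim : Tendsto (fun s ↦ s * (A + η)) (𝓝[>] (0 : ℝ)) (𝓝 0) :=
      ((by fun_prop : Continuous fun s ↦ s * (A + η)).tendsto' 0 0 (by simp)).mono_left
        nhdsWithin_le_nhds
    obtain ⟨s, ⟨G, hG, hGg, hGχ⟩, hsm, (hs : 0 < s)⟩ :=
      ((eventually_exists_convexOn_abs_sub_le h.lipschitzWith.continuous h.exists_isSubgradientAt
        h.exists_forall_lt hrs hsR hχ.continuous hχ0 hη).and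
        ((hlim.eventually_lt_const (lt_min hm hη)).and self_mem_nhdsWithin)).exists
    have hGη (ξ : Plane) : |G ξ - g ξ| ≤ min m η := by
      have hsA : |s * χ ξ| ≤ s * A := by
        rw [abs_mul, abs_of_pos hs]
        exact mul_le_mul_of_nonneg_left (hA ξ) hs.le
      linarith [abs_sub_abs_le_abs_sub (G ξ - g ξ) (s * χ ξ), hGχ ξ]
    have hvar := hC G (fun ξ ↦ s * χ ξ) (s * η) hG (fun ξ ↦ (hGη ξ).trans (min_le_left _ _)) hGg
      (contDiff_const.mul hχ) (fun ξ hξ ↦ by rw [hχ0 ξ fun h' ↦ hξ (hsub h'), mul_zero]) hGχ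
    simp only [mixedHessDet_const_mul_right hχ, mul_left_comm _ s, mul_assoc s,
      integral_const_mul, ← mul_add] at hvar
    have hle := integral_add_mul_le (μ := volume)
      (continuousOn_univ.1 (hG.continuousOn isOpen_univ)) h.lipschitzWith.continuous hN hNs
      fun ξ ↦ (hGη ξ).trans (min_le_right _ _)
    linarith [nonneg_of_mul_nonneg_right hvar hs]
  have hlim : Tendsto (fun η ↦ 2 * (∫ ξ, g ξ * N ξ) + η * (C + ∫ ξ, |N ξ|)) (𝓝[>] (0 : ℝ))
      (𝓝 (2 * ∫ ξ, g ξ * N ξ)) :=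
    ((by fun_prop : Continuous fun η : ℝ ↦ _ + η * _).tendsto' 0 _ (by simp)).mono_left
      nhdsWithin_le_nhds
  linarith [ge_of_tendsto hlim (eventually_mem_nhdsWithin.mono key)]

theorem integral_eq_zero (h : IsPerturbableBall M g u c R) (hmin : IsNewtonMinimizer M u)
    (hr : 0 ≤ r) (hrR : r < R) {χ : Plane → ℝ} (hχ : ContDiff ℝ ∞ χ)
    (hχ0 : ∀ ξ ∉ closedBall c r, χ ξ = 0) :
    ∫ ξ, g ξ * mixedHessDet newtonDensity χ ξ = 0 := by
  have hneg := h.integral_nonneg hmin hr hrR (contDiff_const.mul hχ : ContDiff ℝ ∞ fun ξ ↦ -1 * χ ξ)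
    fun ξ hξ ↦ by rw [hχ0 ξ hξ, mul_zero]
  simp only [mixedHessDet_const_mul_right hχ] at hneg
  simp only [neg_mul, one_mul, mul_neg, integral_neg] at hneg
  linarith [h.integral_nonneg hmin hr hrR hχ hχ0]

end IsPerturbableBall

end Variation

section Ridge

theorem partialDeriv_newtonDensity (i : Fin 2) :
    partialDeriv i newtonDensity = fun ξ ↦ -2 * ξ i * (newtonDensity ξ * newtonDensity ξ) := by
  funext ξ
  have hpos : ‖ξ‖ ^ 2 + 1 ≠ 0 := by positivity
  have hnorm : HasFDerivAt (fun η : Plane ↦ ‖η‖ ^ 2 + 1) (2 • innerSL ℝ ξ) ξ :=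
    (hasStrictFDerivAt_norm_sq ξ).hasFDerivAt.add_const 1
  have hdensity : newtonDensity = fun η ↦ (‖η‖ ^ 2 + 1)⁻¹ := by
    funext η
    rw [newtonDensity, one_div]
  have hderiv : HasFDerivAt newtonDensity (-((‖ξ‖ ^ 2 + 1) ^ 2)⁻¹ • (2 • innerSL ℝ ξ)) ξ := by
    rw [hdensity]
    exact (hasDerivAt_inv hpos).comp_hasFDerivAt ξ hnorm
  rw [partialDeriv, hderiv.fderiv, hdensity]
  simp [EuclideanSpace.inner_single_right]
  field_simp

theorem hessian_newtonDensity (ξ : Plane) (i j : Fin 2) :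
    hessian newtonDensity ξ i j =
      -2 * (if i = j then 1 else 0) * newtonDensity ξ ^ 2 +
        8 * ξ i * ξ j * newtonDensity ξ ^ 3 := by
  have hF : Differentiable ℝ newtonDensity := contDiff_newtonDensity.differentiable (by simp)
  have hcoord : Differentiable ℝ fun ξ : Plane ↦ ξ j :=
    (EuclideanSpace.proj j : Plane →L[ℝ] ℝ).differentiable
  rw [hessian, Matrix.of_apply, partialDeriv_newtonDensity,
    partialDeriv_mul (hcoord.const_mul (-2)) (hF.fun_mul hF), partialDeriv_const_mul hcoord,
    partialDeriv_coord, partialDeriv_mul hF hF, partialDeriv_newtonDensity]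
  ring

theorem partialDeriv_comp_inner_sub {n : ℕ} {φ : ℝ → ℝ} (hφ : Differentiable ℝ φ)
    (q c : EuclideanSpace ℝ (Fin n)) (i : Fin n) :
    partialDeriv i (fun ξ ↦ φ ⟪q, ξ - c⟫_ℝ) = fun ξ ↦ q i * deriv φ ⟪q, ξ - c⟫_ℝ := by
  funext ξ
  have hinner : HasFDerivAt (fun η ↦ ⟪q, η - c⟫_ℝ) (innerSL ℝ q) ξ :=
    (innerSL ℝ q).hasFDerivAt.comp ξ ((hasFDerivAt_id ξ).sub_const c)
  have hderiv : HasFDerivAt (fun η ↦ φ ⟪q, η - c⟫_ℝ) (deriv φ ⟪q, ξ - c⟫_ℝ • innerSL ℝ q) ξ :=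
    (hφ _).hasDerivAt.comp_hasFDerivAt ξ hinner
  rw [partialDeriv, hderiv.fderiv]
  simp [EuclideanSpace.inner_single_right, mul_comm]

theorem hessian_comp_inner_sub {n : ℕ} {φ : ℝ → ℝ} (hφ : ContDiff ℝ 2 φ)
    (q c ξ : EuclideanSpace ℝ (Fin n)) (i j : Fin n) :
    hessian (fun ξ ↦ φ ⟪q, ξ - c⟫_ℝ) ξ i j = q i * q j * deriv (deriv φ) ⟪q, ξ - c⟫_ℝ := by
  have hφ' : ContDiff ℝ 1 (deriv φ) := ((contDiff_succ_iff_deriv (n := 1)).1 hφ).2.2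
  have hdiff : Differentiable ℝ fun ξ ↦ deriv φ ⟪q, ξ - c⟫_ℝ :=
    (hφ'.differentiable one_ne_zero).comp
      ((innerSL ℝ q).differentiable.comp (differentiable_id.sub_const c))
  rw [hessian, Matrix.of_apply, partialDeriv_comp_inner_sub (hφ.differentiable two_ne_zero),
    partialDeriv_const_mul hdiff, partialDeriv_comp_inner_sub (hφ'.differentiable one_ne_zero)]
  ring

theorem contDiff_sqrt_one_add_sq {n : WithTop ℕ∞} : ContDiff ℝ n fun t : ℝ ↦ √(1 + t ^ 2) :=
  (contDiff_const.add (contDiff_id.pow 2)).sqrt fun t ↦ by positivity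

theorem deriv_deriv_sqrt_one_add_sq_zero : deriv (deriv fun t : ℝ ↦ √(1 + t ^ 2)) 0 = 1 := by
  have hderiv : (deriv fun t : ℝ ↦ √(1 + t ^ 2)) = fun t ↦ t / √(1 + t ^ 2) := by
    funext t
    have h : HasDerivAt (fun t : ℝ ↦ 1 + t ^ 2) (2 * t) t := by
      simpa using (hasDerivAt_pow 2 t).const_add 1
    rw [(h.sqrt (by positivity)).deriv, mul_div_mul_left _ _ two_ne_zero]
  have hsqrt : DifferentiableAt ℝ (fun t : ℝ ↦ √(1 + t ^ 2)) 0 :=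
    (contDiff_sqrt_one_add_sq (n := 1)).differentiable one_ne_zero 0
  rw [hderiv, deriv_fun_div differentiableAt_fun_id hsqrt (by simp)]
  simp

theorem convexOn_sqrt_one_add_sq : ConvexOn ℝ univ fun t : ℝ ↦ √(1 + t ^ 2) := by
  have hnorm (t : ℝ) : √(1 + t ^ 2) = ‖(1 + t * Complex.I : ℂ)‖ := by
    simpa using (Complex.norm_add_mul_I 1 t).symm
  simp only [hnorm]
  refine ⟨convex_univ, fun s _ t _ a b ha hb hab ↦ ?_⟩
  have heq : (1 + (a • s + b • t : ℝ) * Complex.I : ℂ) =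
      a • (1 + s * Complex.I) + b • (1 + t * Complex.I) := by
    obtain rfl : b = 1 - a := by linarith
    simp only [Complex.real_smul, smul_eq_mul]
    push_cast
    ring
  beta_reduce
  rw [heq]
  exact convexOn_univ_norm.2 (mem_univ _) (mem_univ _) ha hb hab

theorem sqrt_one_add_sq_le (t : ℝ) : √(1 + t ^ 2) ≤ 1 + |t| :=
  Real.sqrt_le_iff.2 ⟨by positivity, by nlinarith [abs_nonneg t, sq_abs t]⟩

/-- A smooth convex function of linear growth which varies only in the radial direction `c`. -/
noncomputable def ridge (c ξ : Plane) : ℝ :=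
  √(1 + ⟪c, ξ - c⟫_ℝ ^ 2)

theorem contDiff_ridge (c : Plane) : ContDiff ℝ ∞ (ridge c) :=
  contDiff_sqrt_one_add_sq.comp (contDiff_const.inner ℝ (contDiff_id.sub contDiff_const))

theorem convexOn_ridge (c : Plane) : ConvexOn ℝ univ (ridge c) := by
  have h := (convexOn_sqrt_one_add_sq.comp_linearMap (innerSL ℝ c).toLinearMap).translate_right (-c)
  simpa [Function.comp_def, ridge, neg_add_eq_sub] using! h

theorem ridge_self (c : Plane) : ridge c c = 1 := by
  simp [ridge]

theorem ridge_le (c ξ : Plane) : ridge c ξ ≤ 1 + ‖c‖ * ‖ξ - c‖ :=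
  (sqrt_one_add_sq_le _).trans (add_le_add_right (abs_real_inner_le_norm c (ξ - c)) 1)

theorem mixedHessDet_newtonDensity_ridge (c : Plane) :
    mixedHessDet newtonDensity (ridge c) c = -2 * ‖c‖ ^ 2 * newtonDensity c ^ 2 := by
  have hridge (i j : Fin 2) : hessian (ridge c) c i j = c i * c j := by
    simpa [deriv_deriv_sqrt_one_add_sq_zero] using!
      hessian_comp_inner_sub contDiff_sqrt_one_add_sq c c c i j
  simp only [mixedHessDet, hessian_newtonDensity, hridge, EuclideanSpace.norm_sq_eq,
    Fin.sum_univ_two, Real.norm_eq_abs, sq_abs]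
  norm_num
  ring

end Ridge

section Contradiction

section Cap

variable {E : Type*} [NormedAddCommGroup E] [InnerProductSpace ℝ E] {g : E → ℝ} {c q : E} {a d : ℝ}

theorem mul_norm_sub_le_of_gap (hg : ConvexOn ℝ univ g) (hd : 0 < d)
    (hgap : ∀ ξ, d ≤ ‖ξ - c‖ → a ≤ g ξ - g c - ⟪q, ξ - c⟫_ℝ) {ξ : E} (hξ : d ≤ ‖ξ - c‖) :
    a * (‖ξ - c‖ / d) ≤ g ξ - g c - ⟪q, ξ - c⟫_ℝ := by
  have hpos : 0 < ‖ξ - c‖ := hd.trans_le hξ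
  set t := d / ‖ξ - c‖
  have ht : 0 < t := by positivity
  have ht1 : t ≤ 1 := (div_le_one hpos).2 hξ
  have hsphere := hgap (c + t • (ξ - c)) (by
    rw [add_sub_cancel_left, norm_smul, Real.norm_of_nonneg ht.le, div_mul_cancel₀ _ hpos.ne'])
  have hconv := hg.2 (mem_univ c) (mem_univ ξ) (sub_nonneg.2 ht1) ht.le (by ring)
  rw [show (1 - t) • c + t • ξ = c + t • (ξ - c) by module, smul_eq_mul, smul_eq_mul] at hconv
  rw [add_sub_cancel_left, inner_smul_right] at hsphere
  rw [← inv_div, ← div_eq_mul_inv, div_le_iff₀ ht]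
  linarith

theorem exists_affine_add_mul_le (hg : ConvexOn ℝ univ g) (hq : IsSubgradientAt g q c)
    (hd : 0 < d) (ha : 0 < a) (hgap : ∀ ξ, d ≤ ‖ξ - c‖ → a ≤ g ξ - g c - ⟪q, ξ - c⟫_ℝ)
    {S : E → ℝ} {A m : ℝ} (hA : 0 < A) (hS : ∀ ξ, S ξ ≤ S c + A * ‖ξ - c‖) (hm : 0 < m) :
    ∃ α κ, 0 < κ ∧ g c < α + ⟪q, c⟫_ℝ + κ * S c ∧
      (∀ ξ, d ≤ ‖ξ - c‖ → α + ⟪q, ξ⟫_ℝ + κ * S ξ ≤ g ξ) ∧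
      ∀ ξ, α + ⟪q, ξ⟫_ℝ + κ * S ξ ≤ g ξ + m := by
  set ε := min a m / 2
  have hε : 0 < ε := half_pos (lt_min ha hm)
  have hεa : 2 * ε ≤ a := (mul_div_cancel₀ _ two_ne_zero).trans_le (min_le_left a m)
  have hεm : 2 * ε ≤ m := (mul_div_cancel₀ _ two_ne_zero).trans_le (min_le_right a m)
  set κ := ε / (A * d)
  have hκ : 0 < κ := by positivity
  have hle (ξ : E) : g c - ⟪q, c⟫_ℝ + ε - κ * S c + ⟪q, ξ⟫_ℝ + κ * S ξ ≤
      g c + ⟪q, ξ - c⟫_ℝ + ε * (1 + ‖ξ - c‖ / d) := by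
    have hκS := mul_le_mul_of_nonneg_left (hS ξ) hκ.le
    have hκA : κ * (A * ‖ξ - c‖) = ε * (‖ξ - c‖ / d) := by simp only [κ]; field_simp
    rw [inner_sub_right]
    linarith
  have hfar (ξ : E) (hξ : d ≤ ‖ξ - c‖) :
      g c - ⟪q, c⟫_ℝ + ε - κ * S c + ⟪q, ξ⟫_ℝ + κ * S ξ ≤ g ξ := by
    have hgrow := mul_norm_sub_le_of_gap hg hd hgap hξ
    have hone : 1 ≤ ‖ξ - c‖ / d := (one_le_div hd).2 hξ
    nlinarith [hle ξ]
  refine ⟨g c - ⟪q, c⟫_ℝ + ε - κ * S c, κ, hκ, by linarith, hfar, fun ξ ↦ ?_⟩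
  rcases le_total d ‖ξ - c‖ with hξ | hξ
  · linarith [hfar ξ hξ]
  · have hone : ‖ξ - c‖ / d ≤ 1 := (div_le_one hd).2 hξ
    nlinarith [hle ξ, hq ξ]

end Cap

section Smoothing

variable {E : Type*} [NormedAddCommGroup E] [InnerProductSpace ℝ E] [FiniteDimensional ℝ E]
  [MeasurableSpace E] [BorelSpace E]

theorem exists_contDiff_nonneg_abs_sub_le {w : E → ℝ} (hw : UniformContinuous w)
    (hw0 : ∀ ξ, 0 ≤ w ξ) {η : ℝ} (hη : 0 < η) :
    ∃ χ : E → ℝ, ContDiff ℝ ∞ χ ∧ (∀ ξ, 0 ≤ χ ξ) ∧ (∀ ξ, |w ξ - χ ξ| ≤ η) ∧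
      ∀ ξ, χ ξ ≠ 0 → 0 < w ξ := by
  obtain ⟨δ, hδ, hwδ⟩ := Metric.uniformContinuous_iff.1 hw (η / 2) (half_pos hη)
  obtain ⟨n, hn⟩ := (eventually_one_div_add_one_lt hδ).exists
  set ψ : E → ℝ := fun ξ ↦ max (w ξ - η / 2) 0
  have hψ : Continuous ψ := (hw.continuous.sub continuous_const).max continuous_const
  have hosc (ξ ζ : E) (hζ : ζ ∈ ball ξ (1 / (n + 1))) : |w ζ - w ξ| < η / 2 :=
    hwδ ((mem_ball.1 hζ).trans hn)
  refine ⟨mollify n ψ, contDiff_mollify hψ, mollify_nonneg fun ξ ↦ le_max_right _ _, fun ξ ↦ ?_,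
    fun ξ hξ ↦ (hw0 ξ).lt_of_ne fun hwξ ↦ hξ ?_⟩
  · rw [abs_sub_comm]
    refine abs_mollify_sub_le hψ fun ζ hζ ↦ ?_
    have hwψ := abs_max_sub_max_le_abs (w ζ - η / 2) (w ζ) 0
    rw [max_eq_left (hw0 ζ), sub_sub_cancel_left, abs_neg, abs_of_pos (half_pos hη)] at hwψ
    linarith [abs_sub_le (ψ ζ) (w ζ) (w ξ), hosc ξ ζ hζ]
  · have hzero : |mollify n ψ ξ - 0| ≤ 0 := abs_mollify_sub_le hψ fun ζ hζ ↦ by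
      have hwζ := (abs_lt.1 (hosc ξ ζ hζ)).2
      rw [← hwξ, sub_zero] at hwζ
      simp [ψ, max_eq_right (sub_nonpos.2 hwζ.le)]
    simpa using hzero

end Smoothing

section Integral

variable {X : Type*} [MeasurableSpace X] {μ : Measure X}

theorem integral_sub_integral_le_of_abs_sub_le {f g : X → ℝ} {B : Set X} {η : ℝ}
    (hf : Integrable f μ) (hg : Integrable g μ) (hB : μ B < ⊤) (hfB : ∀ x ∉ B, f x = 0)
    (hgB : ∀ x ∉ B, g x = 0) (hη : ∀ x, |f x - g x| ≤ η) :
    ∫ x, f x ∂μ - ∫ x, g x ∂μ ≤ η * μ.real B := by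
  rw [← integral_sub hf hg, ← setIntegral_eq_integral_of_forall_compl_eq_zero
    fun x hx ↦ by rw [hfB x hx, hgB x hx, sub_zero]]
  exact (Real.le_norm_self _).trans (norm_setIntegral_le_of_norm_le_const hB fun x _ ↦ hη x)

theorem integral_mul_le_mul_integral [TopologicalSpace X] [OpensMeasurableSpace X]
    [IsFiniteMeasureOnCompacts μ] {χ Q : X → ℝ} {l : ℝ} (hχ : Continuous χ) (hQ : Continuous Q)
    (hχs : HasCompactSupport χ) (hχ0 : ∀ x, 0 ≤ χ x) (hQl : ∀ x, χ x ≠ 0 → Q x ≤ l) :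
    ∫ x, χ x * Q x ∂μ ≤ l * ∫ x, χ x ∂μ := by
  rw [← integral_const_mul]
  refine integral_mono ((hχ.mul hQ).integrable_of_hasCompactSupport hχs.mul_right)
    ((hχ.integrable_of_hasCompactSupport hχs).const_mul l) fun x ↦ ?_
  beta_reduce
  rcases eq_or_ne (χ x) 0 with hx | hx
  · rw [hx, zero_mul, mul_zero]
  · rw [mul_comm l]
    exact mul_le_mul_of_nonneg_left (hQl x hx) (hχ0 x)

end Integral

namespace IsPerturbableBall

variable {M : ℝ} {g u : Plane → ℝ} {c : Plane} {r R : ℝ}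

theorem exists_convexOn_mixedHessDet_neg (h : IsPerturbableBall M g u c R) (hr : 0 < r)
    (hrR : r < R) {m : ℝ} (hm : 0 < m) :
    ∃ P : Plane → ℝ, ContDiff ℝ ∞ P ∧ ConvexOn ℝ univ P ∧ g c < P c ∧
      (∀ ξ ∉ closedBall c r, P ξ ≤ g ξ) ∧ (∀ ξ, P ξ ≤ g ξ + m) ∧
      ∃ l > 0, ∀ ξ, g ξ < P ξ → mixedHessDet newtonDensity P ξ ≤ -l := by
  have hc : c ≠ 0 := fun hc ↦ h.zero_notMem (hc ▸ mem_closedBall_self (hr.trans hrR).le)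
  set l := ‖c‖ ^ 2 * newtonDensity c ^ 2
  have hl : 0 < l := by
    have hF : 0 < newtonDensity c := by rw [newtonDensity]; positivity
    positivity
  have hneg : ∀ᶠ ξ in 𝓝 c, mixedHessDet newtonDensity (ridge c) ξ < -l :=
    (continuous_mixedHessDet contDiff_newtonDensity (contDiff_ridge c)).continuousAt
      |>.eventually_lt_const (by rw [mixedHessDet_newtonDensity_ridge]; linarith)
  obtain ⟨d, hd, hdneg⟩ := Metric.eventually_nhds_iff.1 hneg
  obtain ⟨a, ha, hgap⟩ := exists_forall_le_sub_sub_inner h.convexOn h.lipschitzWith.continuous hrR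
    h.exists_forall_lt (lt_min hd hr)
  obtain ⟨q, hq⟩ := h.exists_isSubgradientAt c
  obtain ⟨α, κ, hκ, hPc, hPfar, hPm⟩ := exists_affine_add_mul_le h.convexOn hq (lt_min hd hr) ha
    (fun ξ hξ ↦ hgap c q ξ hq hξ (.inl (mem_closedBall_self hr.le))) (norm_pos_iff.2 hc)
    (fun ξ ↦ (ridge_self c).symm ▸ ridge_le c ξ) hm
  have hridge : ContDiff ℝ ∞ fun ξ ↦ κ * ridge c ξ := contDiff_const.mul (contDiff_ridge c)
  refine ⟨fun ξ ↦ α + ⟪q, ξ⟫_ℝ + κ * ridge c ξ,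
    (contDiff_const.add (innerSL ℝ q).contDiff).add hridge,
    ((convexOn_const α convex_univ).add ((innerSL ℝ q).toLinearMap.convexOn convex_univ)).add
      ((convexOn_ridge c).smul hκ.le), hPc, fun ξ hξ ↦ hPfar ξ ?_, hPm, κ * l, by positivity,
    fun ξ hξ ↦ ?_⟩
  · rw [mem_closedBall, dist_eq_norm, not_le] at hξ
    exact (min_le_right d r).trans hξ.le
  · have hξd : ‖ξ - c‖ < d :=
      (not_le.1 fun hle ↦ hξ.not_ge (hPfar ξ hle)).trans_le (min_le_left d r)
    rw [mixedHessDet_affine_add_right hridge,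
      mixedHessDet_const_mul_right (contDiff_ridge c), ← mul_neg]
    exact mul_le_mul_of_nonneg_left (hdneg (by rwa [dist_eq_norm])).le hκ.le

theorem integral_add_mul_mixedHessDet (h : IsPerturbableBall M g u c R)
    (hmin : IsNewtonMinimizer M u) (hr : 0 ≤ r) (hrR : r < R) {G P χ : Plane → ℝ}
    (hP : ContDiff ℝ ∞ P) (hχ : ContDiff ℝ ∞ χ) (hχ0 : ∀ ξ ∉ closedBall c r, χ ξ = 0)
    (hGP : ∀ ξ ∈ tsupport χ, G ξ = P ξ) :
    ∫ ξ, (G ξ + g ξ) * mixedHessDet newtonDensity χ ξ =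
      ∫ ξ, χ ξ * mixedHessDet newtonDensity P ξ := by
  have hχs : HasCompactSupport χ := .intro (isCompact_closedBall c r) hχ0
  have hint {f : Plane → ℝ} (hf : Continuous f) :
      Integrable fun ξ ↦ f ξ * mixedHessDet newtonDensity χ ξ :=
    (hf.mul (continuous_mixedHessDet contDiff_newtonDensity hχ)).integrable_of_hasCompactSupport
      (hasCompactSupport_mixedHessDet hχs).mul_left
  have hsplit (ξ : Plane) : (G ξ + g ξ) * mixedHessDet newtonDensity χ ξ =
      P ξ * mixedHessDet newtonDensity χ ξ + g ξ * mixedHessDet newtonDensity χ ξ := by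
    by_cases hξ : ξ ∈ tsupport χ
    · rw [hGP ξ hξ, add_mul]
    · simp [mixedHessDet_eq_zero_of_notMem_tsupport hξ]
  simp only [hsplit]
  rw [integral_add (hint hP.continuous) (hint h.lipschitzWith.continuous),
    h.integral_eq_zero hmin hr hrR hχ hχ0, add_zero, mixedHessDet_comm _ χ, mixedHessDet_comm _ P,
    integral_mul_mixedHessDet_comm hχ hP contDiff_newtonDensity hχs]

theorem exists_mul_integral_le (h : IsPerturbableBall M g u c R) (hmin : IsNewtonMinimizer M u)
    (hr : 0 < r) (hrR : r < R) :
    ∃ w : Plane → ℝ, Continuous w ∧ (∀ ξ, 0 ≤ w ξ) ∧ (∀ ξ ∉ closedBall c r, w ξ = 0) ∧ 0 < w c ∧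
      ∃ l > 0, ∃ C, ∀ (χ : Plane → ℝ) (η : ℝ), ContDiff ℝ ∞ χ → (∀ ξ, 0 ≤ χ ξ) →
        (∀ ξ, χ ξ ≠ 0 → 0 < w ξ) → (∀ ξ, |w ξ - χ ξ| ≤ η) → l * ∫ ξ, χ ξ ≤ η * C := by
  obtain ⟨C, m, hm, hC⟩ := h.exists_le_mul_add_integral hmin hr.le hrR
  obtain ⟨P, hP, hPconv, hPc, hPg, hPm, l, hl, hPl⟩ := h.exists_convexOn_mixedHessDet_neg hr hrR hm
  have hg : Continuous g := h.lipschitzWith.continuous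
  have hmax (ξ : Plane) : max (g ξ) (P ξ) - g ξ = max (P ξ - g ξ) 0 := by
    rw [← max_sub_sub_right, sub_self, max_comm]
  refine ⟨fun ξ ↦ max (P ξ - g ξ) 0, (hP.continuous.sub hg).max continuous_const,
    fun ξ ↦ le_max_right _ _, fun ξ hξ ↦ max_eq_right (sub_nonpos.2 (hPg ξ hξ)),
    lt_max_of_lt_left (sub_pos.2 hPc), l, hl, C, fun χ η hχ hχ0 hχw hη ↦ ?_⟩
  have hχP (ξ : Plane) (hξ : χ ξ ≠ 0) : g ξ < P ξ := by
    simpa using hχw ξ hξ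
  have hχr (ξ : Plane) (hξ : ξ ∉ closedBall c r) : χ ξ = 0 :=
    of_not_not fun hne ↦ (hχP ξ hne).not_ge (hPg ξ hξ)
  have hvar := hC (fun ξ ↦ max (g ξ) (P ξ)) χ η (h.convexOn.sup hPconv)
    (fun ξ ↦ by
      rw [hmax, abs_of_nonneg (le_max_right _ _)]
      exact max_le (sub_le_iff_le_add'.2 (hPm ξ)) hm.le)
    (fun ξ hξ ↦ max_eq_left (hPg ξ hξ)) hχ hχr fun ξ ↦ by rw [hmax]; exact hη ξ
  rw [h.integral_add_mul_mixedHessDet hmin hr.le hrR hP hχ hχr fun ξ hξ ↦ max_eq_right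
    (closure_minimal (fun ζ hζ ↦ (hχP ζ hζ).le) (isClosed_le hg hP.continuous) hξ)] at hvar
  have hneg := integral_mul_le_mul_integral (μ := volume) hχ.continuous
    (continuous_mixedHessDet contDiff_newtonDensity hP)
    (.intro (isCompact_closedBall c r) hχr) hχ0 fun ξ hξ ↦ hPl ξ (hχP ξ hξ)
  linarith

theorem not_isNewtonMinimizer (h : IsPerturbableBall M g u c R) (hR : 0 < R) :
    ¬ IsNewtonMinimizer M u := fun hmin ↦ by
  set B := closedBall c (R / 2)
  obtain ⟨w, hw, hw0, hwB, hwc, l, hl, C, hC⟩ :=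
    h.exists_mul_integral_le hmin (half_pos hR) (half_lt_self hR)
  have hws : HasCompactSupport w := .intro (isCompact_closedBall c _) hwB
  have hwpos : 0 < ∫ ξ, w ξ := hw.integral_pos_of_hasCompactSupport_nonneg_nonzero hws hw0 hwc.ne'
  have key : ∀ η > 0, l * ∫ ξ, w ξ ≤ η * (C + l * volume.real B) := fun η hη ↦ by
    obtain ⟨χ, hχ, hχ0, hwχ, hχw⟩ :=
      exists_contDiff_nonneg_abs_sub_le (hws.uniformContinuous_of_continuous hw) hw0 hη
    have hχB (ξ : Plane) (hξ : ξ ∉ B) : χ ξ = 0 :=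
      of_not_not fun hne ↦ (hχw ξ hne).ne' (hwB ξ hξ)
    have hχint : Integrable χ := hχ.continuous.integrable_of_hasCompactSupport
      (.intro (isCompact_closedBall c _) hχB)
    have hlow := mul_le_mul_of_nonneg_left (integral_sub_integral_le_of_abs_sub_le
      (hw.integrable_of_hasCompactSupport hws) hχint measure_closedBall_lt_top hwB hχB hwχ) hl.le
    linarith [hC χ η hχ hχ0 hχw hwχ]
  have hlim : Tendsto (fun η ↦ η * (C + l * volume.real B)) (𝓝[>] (0 : ℝ)) (𝓝 0) :=
    ((by fun_prop : Continuous fun η : ℝ ↦ η * _).tendsto' 0 0 (by simp)).mono_left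
      nhdsWithin_le_nhds
  exact (mul_pos hl hwpos).not_ge (ge_of_tendsto hlim (eventually_mem_nhdsWithin.mono key))

end IsPerturbableBall

end Contradiction

section ExtremePoints

variable {E : Type*} [NormedAddCommGroup E]

theorem isCompact_convexJoin [NormedSpace ℝ E] {s t : Set E} (hs : IsCompact s)
    (ht : IsCompact t) : IsCompact (convexJoin ℝ s t) := by
  have hcont : Continuous fun p : E × E × ℝ ↦ (1 - p.2.2) • p.1 + p.2.2 • p.2.1 := by fun_prop
  convert (hs.prod (ht.prod (isCompact_Icc (a := (0 : ℝ)) (b := 1)))).image hcont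
  ext x
  simp only [mem_convexJoin, segment_eq_image]
  constructor
  · rintro ⟨a, ha, b, hb, θ, hθ, rfl⟩
    exact ⟨(a, b, θ), ⟨ha, hb, hθ⟩, rfl⟩
  · rintro ⟨⟨a, b, θ⟩, ⟨ha, hb, hθ⟩, rfl⟩
    exact ⟨a, ha, b, hb, θ, hθ, rfl⟩

theorem exists_isCompact_convex_superset [NormedSpace ℝ E] {K O s : Set E} (hK : IsCompact K)
    (hKc : Convex ℝ K) (hO : IsOpen O) (hKO : Convex ℝ (K ∩ O)) (hs : IsCompact s)
    (hsub : s ⊆ K ∩ O) : ∃ T, IsCompact T ∧ Convex ℝ T ∧ s ⊆ T ∧ T ⊆ K ∩ O := by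
  refine hs.induction_on (p := fun s ↦ ∃ T, IsCompact T ∧ Convex ℝ T ∧ s ⊆ T ∧ T ⊆ K ∩ O)
    ⟨∅, isCompact_empty, convex_empty, Subset.rfl, empty_subset _⟩ ?_ ?_ fun x hx ↦ ?_
  · rintro s t hst ⟨T, hT, hTc, htT, hTK⟩
    exact ⟨T, hT, hTc, hst.trans htT, hTK⟩
  · rintro s t ⟨S, hS, hSc, hsS, hSK⟩ ⟨T, hT, hTc, htT, hTK⟩
    rcases S.eq_empty_or_nonempty with rfl | hSne
    · exact ⟨T, hT, hTc, union_subset (hsS.trans (empty_subset _)) htT, hTK⟩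
    rcases T.eq_empty_or_nonempty with rfl | hTne
    · exact ⟨S, hS, hSc, union_subset hsS (htT.trans (empty_subset _)), hSK⟩
    exact ⟨convexJoin ℝ S T, isCompact_convexJoin hS hT, hSc.convexJoin hTc,
      union_subset (hsS.trans (subset_convexJoin_left hTne))
        (htT.trans (subset_convexJoin_right hSne)), convexJoin_subset hSK hTK hKO⟩
  · obtain ⟨ε, hε, hball⟩ :=
      nhds_basis_closedBall.mem_iff.1 (hO.mem_nhds (hsub hx).2)
    exact ⟨closedBall x ε ∩ s,
      inter_mem (mem_nhdsWithin_of_mem_nhds (closedBall_mem_nhds x hε)) self_mem_nhdsWithin,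
      K ∩ closedBall x ε, hK.inter_right isClosed_closedBall, hKc.inter (convex_closedBall _ _),
      fun y hy ↦ ⟨(hsub hy.2).1, hy.1⟩, inter_subset_inter_right _ hball⟩

theorem exists_forall_lt_lt_of_mem_extremePoints [NormedSpace ℝ E] {K U : Set E} {p : E}
    (hK : IsCompact K) (hKc : Convex ℝ K) (hp : p ∈ K.extremePoints ℝ) (hU : IsOpen U)
    (hpU : p ∈ U) : ∃ (f : StrongDual ℝ E) (β : ℝ), (∀ a ∈ K \ U, f a < β) ∧ β < f p := by
  obtain ⟨T, hT, hTc, hKT, hTp⟩ := exists_isCompact_convex_superset hK hKc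
    isOpen_compl_singleton (hKc.mem_extremePoints_iff_convex_sdiff.1 hp).2 (hK.diff hU)
    fun a ha ↦ ⟨ha.1, fun hap ↦ ha.2 (hap ▸ hpU)⟩
  obtain ⟨f, β, hTβ, hβ⟩ :=
    geometric_hahn_banach_closed_point hTc hT.isClosed fun hpT ↦ (hTp hpT).2 rfl
  exact ⟨f, β, fun a ha ↦ hTβ a (hKT ha), hβ⟩

variable [InnerProductSpace ℝ E] {K U : Set (E × ℝ)} {p₀ : E × ℝ} {γ : ℝ}

theorem exists_slope_of_mem_extremePoints [CompleteSpace E] (hK : IsCompact K) (hKc : Convex ℝ K)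
    (hp₀ : p₀ ∈ K.extremePoints ℝ) (hU : IsOpen U) (hpU : p₀ ∈ U)
    (hbelow : ∃ z < p₀.2, (p₀.1, z) ∈ K \ U) :
    ∃ ξ, ∃ γ > 0, ∀ p ∈ K \ U, p.2 - ⟪ξ, p.1⟫_ℝ + γ ≤ p₀.2 - ⟪ξ, p₀.1⟫_ℝ := by
  obtain ⟨f, β, hfβ, hβ⟩ := exists_forall_lt_lt_of_mem_extremePoints hK hKc hp₀ hU hpU
  set ζ : E := (toDual ℝ E).symm (f.comp (.inl ℝ E ℝ)) with hζ
  set τ := f (0, 1)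
  have hf (p : E × ℝ) : f p = ⟪ζ, p.1⟫_ℝ + p.2 * τ := by
    have hvert : f (0, p.2) = p.2 * τ := by
      rw [← smul_eq_mul, ← map_smul, Prod.smul_mk, smul_zero, smul_eq_mul, mul_one]
    rw [← hvert, hζ, toDual_symm_apply, ← f.comp_inl_add_comp_inr]
    rfl
  obtain ⟨z, hz, hzK⟩ := hbelow
  have hτ : 0 < τ := by
    have hlt := (hfβ _ hzK).trans hβ
    rw [hf, hf] at hlt
    exact pos_of_mul_pos_right (b := τ) (a := p₀.2 - z) (by linarith) (by linarith)
  refine ⟨-(τ⁻¹ • ζ), (f p₀ - β) / τ, div_pos (sub_pos.2 hβ) hτ, fun p hp ↦ ?_⟩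
  have hslope (q : E × ℝ) : q.2 - ⟪-(τ⁻¹ • ζ), q.1⟫_ℝ = f q / τ := by
    rw [hf, inner_neg_left, real_inner_smul_left]
    field_simp
    ring
  rw [hslope, hslope, ← add_div]
  gcongr
  linarith [hfβ p hp]

theorem eventually_forall_sub_inner_add_le {K : Set (E × ℝ)} (hK : Bornology.IsBounded K)
    {ξ₁ : E} (hγ : 0 < γ)
    (h : ∀ p ∈ K, p.2 - ⟪ξ₁, p.1⟫_ℝ + γ ≤ p₀.2 - ⟪ξ₁, p₀.1⟫_ℝ) :
    ∀ᶠ ξ in 𝓝 ξ₁, ∀ p ∈ K, p.2 - ⟪ξ, p.1⟫_ℝ + γ / 2 ≤ p₀.2 - ⟪ξ, p₀.1⟫_ℝ := by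
  obtain ⟨C, -, hKC⟩ := hK.exists_pos_norm_le
  have hlim : Tendsto (fun ξ ↦ ‖ξ - ξ₁‖ * (‖p₀.1‖ + C)) (𝓝 ξ₁) (𝓝 0) :=
    (by fun_prop : Continuous fun ξ ↦ ‖ξ - ξ₁‖ * (‖p₀.1‖ + C)).tendsto' ξ₁ 0 (by simp)
  filter_upwards [hlim.eventually_lt_const (half_pos hγ)] with ξ hξ p hp
  have hinner : ⟪ξ - ξ₁, p₀.1 - p.1⟫_ℝ ≤ ‖ξ - ξ₁‖ * (‖p₀.1‖ + C) :=
    (real_inner_le_norm _ _).trans <| by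
      gcongr
      exact (norm_sub_le _ _).trans (by gcongr; exact (norm_fst_le p).trans (hKC p hp))
  simp only [inner_sub_left, inner_sub_right] at hinner
  linarith [h p hp]

theorem exists_closedBall_forall_sub_inner_add_le [CompleteSpace E] [Nontrivial E]
    (hK : IsCompact K) (hKc : Convex ℝ K) (hp₀ : p₀ ∈ K.extremePoints ℝ) (hU : IsOpen U)
    (hpU : p₀ ∈ U) (hbelow : ∃ z < p₀.2, (p₀.1, z) ∈ K \ U) :
    ∃ c, ∃ R > 0, ∃ γ > 0, 0 ∉ closedBall c R ∧ ∀ ξ ∈ closedBall c R, ∀ p ∈ K \ U,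
      p.2 - ⟪ξ, p.1⟫_ℝ + γ ≤ p₀.2 - ⟪ξ, p₀.1⟫_ℝ := by
  obtain ⟨ξ₁, γ, hγ, hξ₁⟩ := exists_slope_of_mem_extremePoints hK hKc hp₀ hU hpU hbelow
  have hnear := eventually_forall_sub_inner_add_le (hK.isBounded.subset sdiff_subset) hγ hξ₁
  obtain ⟨c, hc, hc0⟩ := ((dense_compl_singleton (0 : E)).inter_nhds_nonempty
    (eventually_eventually_nhds.2 hnear)).imp fun _ ↦ And.symm
  obtain ⟨R, hR, hball⟩ := nhds_basis_closedBall.mem_iff.1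
    (inter_mem hc (isOpen_compl_singleton.mem_nhds hc0))
  exact ⟨c, R, hR, γ / 2, half_pos hγ, fun h0 ↦ (hball h0).2 rfl, fun ξ hξ ↦ (hball hξ).1⟩

end ExtremePoints

section UpperSupport

variable {E : Type*} [NormedAddCommGroup E] [InnerProductSpace ℝ E]

/-- The support function of the body `K ⊆ E × ℝ` restricted to the upward normals `(-ξ, 1)`. -/
noncomputable def upperSupport (K : Set (E × ℝ)) (ξ : E) : ℝ :=
  sSup ((fun p ↦ p.2 - ⟪ξ, p.1⟫_ℝ) '' K)

variable {K : Set (E × ℝ)} {p : E × ℝ} {ξ : E}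

theorem exists_eq_upperSupport (hK : IsCompact K) (hne : K.Nonempty) (ξ : E) :
    ∃ p ∈ K, p.2 - ⟪ξ, p.1⟫_ℝ = upperSupport K ξ :=
  (hK.exists_sSup_image_eq hne
    (by fun_prop : Continuous fun p : E × ℝ ↦ p.2 - ⟪ξ, p.1⟫_ℝ).continuousOn).imp
    fun _ ↦ And.imp_right Eq.symm

theorem le_upperSupport (hK : IsCompact K) (hp : p ∈ K) (ξ : E) :
    p.2 - ⟪ξ, p.1⟫_ℝ ≤ upperSupport K ξ :=
  le_csSup (hK.bddAbove_image
    (by fun_prop : Continuous fun p : E × ℝ ↦ p.2 - ⟪ξ, p.1⟫_ℝ).continuousOn)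
    (mem_image_of_mem _ hp)

theorem isSubgradientAt_upperSupport (hK : IsCompact K) (hp : p ∈ K)
    (hmax : p.2 - ⟪ξ, p.1⟫_ℝ = upperSupport K ξ) : IsSubgradientAt (upperSupport K) (-p.1) ξ := by
  intro η
  rw [← hmax, inner_neg_left, inner_sub_right, real_inner_comm η, real_inner_comm ξ]
  linarith [le_upperSupport hK hp η]

end UpperSupport

section AssocBody

variable {M : ℝ} {u : Plane → ℝ} {x : Plane} {p : Plane × ℝ}

theorem convex_assocBody (hu : ConcaveOn ℝ Omega u) : Convex ℝ (assocBody u) := by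
  refine Convex.closure ?_
  have hset : {p : Plane × ℝ | p.1 ∈ Omega ∧ 0 ≤ p.2 ∧ p.2 ≤ u p.1} =
      {p | p.1 ∈ Omega ∧ p.2 ≤ u p.1} ∩ LinearMap.snd ℝ Plane ℝ ⁻¹' Ici 0 := by
    ext p
    exact (and_congr_right' and_comm).trans and_assoc.symm
  rw [hset]
  exact hu.convex_hypograph.inter ((convex_Ici 0).linear_preimage _)

theorem mem_assocBody {z : ℝ} (hx : x ∈ Omega) (hz : 0 ≤ z) (hzx : z ≤ u x) :
    (x, z) ∈ assocBody u :=
  subset_closure ⟨hx, hz, hzx⟩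

theorem assocBody_subset (huM : ∀ x ∈ Omega, u x ∈ Icc 0 M) :
    assocBody u ⊆ closedBall 0 1 ×ˢ Icc 0 M :=
  closure_minimal (fun _ hp ↦ ⟨ball_subset_closedBall hp.1, hp.2.1, hp.2.2.trans (huM _ hp.1).2⟩)
    (isClosed_closedBall.prod isClosed_Icc)

theorem isCompact_assocBody (huM : ∀ x ∈ Omega, u x ∈ Icc 0 M) : IsCompact (assocBody u) :=
  ((isCompact_closedBall 0 1).prod isCompact_Icc).of_isClosed_subset isClosed_closure
    (assocBody_subset huM)

theorem le_of_mem_assocBody (hu : ConcaveOn ℝ Omega u) (hp : p ∈ assocBody u) (hx : p.1 ∈ Omega) :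
    p.2 ≤ u p.1 := by
  have hcont : ContinuousAt u p.1 :=
    (hu.continuousOn isOpen_ball).continuousAt (isOpen_ball.mem_nhds hx)
  exact ContinuousWithinAt.closure_le hp continuousWithinAt_snd
    (hcont.comp continuousAt_fst).continuousWithinAt fun _ hy ↦ hy.2.2

theorem le_add_inner_of_mem_assocBody {a : ℝ} {ξ : Plane}
    (hle : ∀ y ∈ Omega, u y ≤ a + ⟪ξ, y⟫_ℝ) (hp : p ∈ assocBody u) : p.2 ≤ a + ⟪ξ, p.1⟫_ℝ :=
  ContinuousWithinAt.closure_le hp continuousWithinAt_snd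
    (by fun_prop : Continuous fun p : Plane × ℝ ↦ a + ⟪ξ, p.1⟫_ℝ).continuousWithinAt
    fun p hp ↦ hp.2.2.trans (hle p.1 hp.1)

theorem pos_of_mem_extremePoints_assocBody (hu : ∀ x ∈ Omega, 0 ≤ u x) (hx : x ∈ Omega)
    (hext : (x, u x) ∈ (assocBody u).extremePoints ℝ) : 0 < u x := by
  refine (hu x hx).lt_of_ne fun h0 ↦ ?_
  rw [← h0] at hext
  refine disjoint_left.1 (disjoint_interior_extremePoints Omega)
    (isOpen_ball.subset_interior_iff.2 Subset.rfl hx) ⟨hx, fun y hy z hz hyz ↦ ?_⟩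
  have hmem : (x, (0 : ℝ)) ∈ openSegment ℝ (y, 0) (z, 0) := by
    rw [← Prod.image_mk_openSegment_left]
    exact mem_image_of_mem _ hyz
  exact congrArg Prod.fst
    (hext.2 (mem_assocBody hy le_rfl (hu y hy)) (mem_assocBody hz le_rfl (hu z hz)) hmem)

theorem isConcaveConjugateOn_upperSupport_assocBody (hu : ConcaveOn ℝ Omega u)
    (huM : ∀ x ∈ Omega, u x ∈ Icc 0 M) :
    IsConcaveConjugateOn Omega (upperSupport (assocBody u)) u := by
  have hK := isCompact_assocBody huM
  refine ⟨fun x hx ξ ↦ ?_, fun x hx hdiff ε hε ↦ ⟨∇ u x, ?_⟩⟩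
  · exact sub_le_iff_le_add.1
      (le_upperSupport hK (mem_assocBody hx (huM x hx).1 le_rfl) ξ)
  · obtain ⟨p, hp, hmax⟩ := exists_eq_upperSupport hK
      ⟨_, mem_assocBody hx (huM x hx).1 le_rfl⟩ (∇ u x)
    have htangent : p.2 ≤ u x - ⟪∇ u x, x⟫_ℝ + ⟪∇ u x, p.1⟫_ℝ :=
      le_add_inner_of_mem_assocBody (fun y hy ↦ by
        have hle := convexOn_add_fderiv_sub_le hu.neg hx hy hdiff.hasGradientAt.hasFDerivAt.neg
        simp only [neg_apply, Pi.neg_apply, toDual_apply_apply, inner_sub_right] at hle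
        linarith) hp
    linarith

theorem upperSupport_assocBody_add_inner_lt (hu : ConcaveOn ℝ Omega u)
    (huM : ∀ x ∈ Omega, u x ∈ Icc 0 M) {ξ : Plane} (hp : p ∈ assocBody u) (hx : p.1 ∈ Omega)
    (hdiff : DifferentiableAt ℝ u p.1)
    (hmax : p.2 - ⟪ξ, p.1⟫_ℝ = upperSupport (assocBody u) ξ) :
    ∀ η ≠ ξ, upperSupport (assocBody u) ξ + ⟪-p.1, η - ξ⟫_ℝ < upperSupport (assocBody u) η := by
  intro η hη
  by_contra! hle
  have hconj := isConcaveConjugateOn_upperSupport_assocBody hu huM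
  have hgrad (ζ : Plane) (hζ : upperSupport (assocBody u) ζ + ⟪ζ, p.1⟫_ℝ ≤ u p.1) : ζ = ∇ u p.1 :=
    eq_gradient_of_forall_le_add_inner (isOpen_ball.mem_nhds hx) hdiff
      (fun y hy ↦ hconj.le_add_inner y hy ζ) hζ
  have hpu := le_of_mem_assocBody hu hp hx
  rw [inner_neg_left, inner_sub_right, real_inner_comm η, real_inner_comm ξ] at hle
  exact hη ((hgrad η (by linarith)).trans (hgrad ξ (by linarith)).symm)

theorem exists_closedBall_forall_maximizer_mem {W : Set Plane} (hu : ConcaveOn ℝ Omega u)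
    (huM : ∀ x ∈ Omega, u x ∈ Icc 0 M) (hW : IsOpen W) (hx : x ∈ W) (hxΩ : x ∈ Omega)
    (hext : (x, u x) ∈ (assocBody u).extremePoints ℝ) :
    ∃ c, ∃ R > 0, 0 ∉ closedBall c R ∧
      (∃ γ > 0, ∀ ξ ∈ closedBall c R, ∀ y ∈ Omega, γ ≤ upperSupport (assocBody u) ξ + ⟪ξ, y⟫_ℝ) ∧
      ∀ ξ ∈ closedBall c R, ∀ p ∈ assocBody u,
        p.2 - ⟪ξ, p.1⟫_ℝ = upperSupport (assocBody u) ξ → p.1 ∈ W := by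
  have hK := isCompact_assocBody huM
  have hbase (y : Plane) (hy : y ∈ Omega) : (y, (0 : ℝ)) ∈ assocBody u \ (W ×ˢ Ioi (0 : ℝ)) :=
    ⟨mem_assocBody hy le_rfl (huM y hy).1, fun h ↦ lt_irrefl 0 (mem_Ioi.1 h.2)⟩
  have hpos := pos_of_mem_extremePoints_assocBody (fun y hy ↦ (huM y hy).1) hxΩ hext
  obtain ⟨c, R, hR, γ, hγ, h0, hsep⟩ := exists_closedBall_forall_sub_inner_add_le hK
    (convex_assocBody hu) hext (hW.prod isOpen_Ioi) ⟨hx, hpos⟩ ⟨0, hpos, hbase x hxΩ⟩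
  refine ⟨c, R, hR, h0, ⟨γ, hγ, fun ξ hξ y hy ↦ ?_⟩, fun ξ hξ p hp hmax ↦ ?_⟩
  · have hgap := hsep ξ hξ _ (hbase y hy)
    dsimp only at hgap
    linarith [le_upperSupport hK hext.1 ξ]
  · by_contra hpW
    linarith [hsep ξ hξ p ⟨hp, fun hpU ↦ hpW hpU.1⟩, le_upperSupport hK hext.1 ξ]

theorem exists_isPerturbableBall {W : Set Plane} (hu : ConcaveOn ℝ Omega u)
    (huM : ∀ x ∈ Omega, u x ∈ Icc 0 M) (hW : IsOpen W) (hWΩ : W ⊆ Omega)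
    (hdiff : ∀ x ∈ W, DifferentiableAt ℝ u x) (hx : x ∈ W)
    (hext : (x, u x) ∈ (assocBody u).extremePoints ℝ) :
    ∃ g c R, 0 < R ∧ IsPerturbableBall M g u c R := by
  have hK := isCompact_assocBody huM
  obtain ⟨ρ, hxρ, hρ⟩ := exists_between (mem_ball_zero_iff.1 (hWΩ hx))
  lift ρ to NNReal using (norm_nonneg x).trans hxρ.le
  obtain ⟨c, R, hR, h0, hγ, hmem⟩ := exists_closedBall_forall_maximizer_mem hu huM
    (hW.inter isOpen_ball) ⟨hx, mem_ball_zero_iff.2 hxρ⟩ (hWΩ hx) hext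
  choose Z hZ hmax using exists_eq_upperSupport hK ⟨_, hext.1⟩
  have hsub (ξ : Plane) : IsSubgradientAt (upperSupport (assocBody u)) (-(Z ξ).1) ξ :=
    isSubgradientAt_upperSupport hK (hZ ξ) (hmax ξ)
  refine ⟨upperSupport (assocBody u), c, R, hR, {
    isConcaveConjugateOn := isConcaveConjugateOn_upperSupport_assocBody hu huM
    lipschitzWith := lipschitzOnWith_univ.1 <|
      lipschitzOnWith_of_forall_exists_isSubgradientAt fun ξ _ ↦ ⟨_, ?_, hsub ξ⟩
    exists_isSubgradientAt := fun ξ ↦ ⟨_, hsub ξ⟩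
    apply_zero_le := ?_
    zero_notMem := h0
    exists_lipschitzOnWith := ⟨ρ, by exact_mod_cast hρ,
      lipschitzOnWith_of_forall_exists_isSubgradientAt fun ξ hξ ↦ ⟨_, ?_, hsub ξ⟩⟩
    exists_pos_le := hγ
    exists_forall_lt := fun ξ hξ ↦ ⟨-(Z ξ).1, ?_⟩ }⟩
  · simpa using! (assocBody_subset huM (hZ ξ)).1
  · simpa [← hmax] using! (assocBody_subset huM (hZ 0)).2.2
  · rw [norm_neg]
    exact (mem_ball_zero_iff.1 (hmem ξ hξ _ (hZ ξ) (hmax ξ)).2).le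
  · have hZW := (hmem ξ hξ _ (hZ ξ) (hmax ξ)).1
    exact upperSupport_assocBody_add_inner_lt hu huM (hZ ξ) (hWΩ hZW) (hdiff _ hZW) (hmax ξ)

end AssocBody

end

/-- The graph of a minimizer above any open set of differentiability contains
no extreme points of the associated convex body `K`. -/
theorem minimizer_graph_no_extreme_points (M : ℝ) (hM : 0 < M)
    (u : EuclideanSpace ℝ (Fin 2) → ℝ)
    (hu : ConcaveOn ℝ Omega u) (huM : ∀ x ∈ Omega, u x ∈ Icc 0 M)
    (hmin : ∀ v : EuclideanSpace ℝ (Fin 2) → ℝ,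
      ConcaveOn ℝ Omega v → (∀ x ∈ Omega, v x ∈ Icc 0 M) → J u ≤ J v)
    (ω : Set (EuclideanSpace ℝ (Fin 2))) (hω : IsOpen ω) (hωΩ : ω ⊆ Omega)
    (hdiff : ∀ x ∈ ω, DifferentiableAt ℝ u x) :
    ∀ x ∈ ω, (x, u x) ∉ Set.extremePoints ℝ (assocBody u) := by
  intro x hx hext
  obtain ⟨g, c, R, hR, hball⟩ := exists_isPerturbableBall hu huM hω hωΩ hdiff hx hext
  exact hball.not_isNewtonMinimizer hR ⟨hu, huM, hmin⟩
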